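/- arXiv:1912.06069 — 5 statements merged into one kernel-verified Lean document; each statement's English description precedes it below -/
import Mathlib

section
/- Let X be a compact metric space, φ: X → X a homeomorphism, F: X → ℝ a continuous function and β ∈ ℝ. The following are equivalent: (1) there exists an e^{βF}-conformal measure for φ; (2) there exists a point x ∈ X such that limsup_{k→∞} (1/k)·∑_{i=0}^{k-1} β·F(φ^i(x)) ≤ 0 and limsup_{k→∞} (1/k)·∑_{i=1}^{k} (−β·F(φ^{-i}(x))) ≤ 0; (3) there exists a point x ∈ X such that liminf_{k→∞} (1/k)·∑_{i=0}^{k-1} β·F(φ^i(x)) ≤ 0 and liminf_{k→∞} (1/k)·∑_{i=1}^{k} (−β·F(φ^{-i}(x))) ≤ 0. -/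
open MeasureTheory Filter Topology

/-- A Borel probability measure `m` is `e^{βF}`-conformal for the homeomorphism `φ` if
`∫ f dm = ∫ (f ∘ φ) e^{βF} dm` for every continuous `f : X → ℝ`. -/
def IsConformalMeasure {X : Type*} [TopologicalSpace X] [MeasurableSpace X]
    (φ : X ≃ₜ X) (F : X → ℝ) (β : ℝ) (m : Measure X) : Prop :=
  IsProbabilityMeasure m ∧
    ∀ f : X → ℝ, Continuous f →
      ∫ x, f x ∂m = ∫ x, f (φ x) * Real.exp (β * F x) ∂m

/-!
Write `S k` for the Birkhoff sums of `βF` along `φ`. Conformality is inherited by `φ⁻¹` with `F`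
replaced by `-F ∘ φ⁻¹`, whose Birkhoff sums along `φ⁻¹` are the backward sums.

If `m` is conformal then `∫ exp (S k) dm = 1` for all `k`, so by Markov's inequality and
Borel–Cantelli almost every `x` satisfies `S k x ≤ 2 log k` eventually; the same applies to `φ⁻¹`.

Conversely, if `liminf (S k x) / k ≤ 0`, then the partial sums of `exp (S k x)` do not grow
exponentially, so `exp (S N x) ≤ ε ∑ n < N, exp (S n x)` for some `N`, and likewise for the backward
sums and some `M`. Give the points `φ^k y`, `k < M + N`, of the orbit segment through `x` that
starts at `y = φ^{-M} x` masses proportional to `exp (S k y)`. The conformality relation then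
telescopes to the two endpoints of the segment, whose weights are at most `ε` times the total, and
a weak limit as `ε → 0` is conformal.
-/

section BirkhoffSum

variable {α : Type*}

lemma norm_birkhoffAverage_le (𝕜 : Type*) {E : Type*} [RCLike 𝕜] [NormedAddCommGroup E]
    [NormedSpace 𝕜 E] {T : α → α} {g : α → E} {C : ℝ} (hg : ∀ x, ‖g x‖ ≤ C) (n : ℕ) (x : α) :
    ‖birkhoffAverage 𝕜 T g n x‖ ≤ C := by
  rcases n.eq_zero_or_pos with rfl | hn
  · simpa using (norm_nonneg _).trans (hg x)
  · have hsum : ‖birkhoffSum T g n x‖ ≤ n * C := by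
      simpa [birkhoffSum] using norm_sum_le_of_le (Finset.range n) fun i _ => hg (T^[i] x)
    rw [birkhoffAverage, norm_smul, norm_inv, RCLike.norm_natCast,
      inv_mul_le_iff₀ (Nat.cast_pos.2 hn)]
    exact hsum

lemma continuous_birkhoffSum [TopologicalSpace α] {M : Type*} [TopologicalSpace M]
    [AddCommMonoid M] [ContinuousAdd M] {T : α → α} {g : α → M} (hT : Continuous T)
    (hg : Continuous g) (n : ℕ) : Continuous (birkhoffSum T g n) :=
  continuous_finsetSum _ fun i _ => hg.comp (hT.iterate i)

lemma isBoundedUnder_birkhoffAverage [TopologicalSpace α] [CompactSpace α] {g : α → ℝ}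
    (hg : Continuous g) (T : α → α) (x : α) :
    IsBoundedUnder (· ≤ ·) atTop (fun k => birkhoffAverage ℝ T g k x) ∧
      IsBoundedUnder (· ≥ ·) atTop (fun k => birkhoffAverage ℝ T g k x) := by
  obtain ⟨C, hC⟩ := isCompact_univ.exists_bound_of_continuousOn hg.continuousOn
  exact isBoundedUnder_le_abs.1 <| isBoundedUnder_of
    ⟨C, fun k => norm_birkhoffAverage_le ℝ (fun y => hC y (Set.mem_univ y)) k x⟩

lemma birkhoffSum_add_birkhoffSum_leftInverse {M : Type*} [AddCommGroup M] {T T' : α → α}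
    (hT : Function.LeftInverse T' T) (g : α → M) (m n : ℕ) (y : α) :
    birkhoffSum T g (m + n) y + birkhoffSum T' (fun z => -g (T' z)) n (T^[m + n] y) =
      birkhoffSum T g m y := by
  induction n with
  | zero => simp
  | succ n ih =>
    have hback : T' (T^[m + (n + 1)] y) = T^[m + n] y := by
      rw [← add_assoc, Function.iterate_succ_apply', hT]
    rw [birkhoffSum_succ', hback, ← add_assoc m n 1, birkhoffSum_succ, ← ih]
    abel

lemma sum_range_exp_birkhoffSum_mul_sub (T : α → α) (g f : α → ℝ) (n : ℕ) (y : α) :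
    ∑ k ∈ Finset.range n, Real.exp (birkhoffSum T g k y) *
        (f (T^[k] y) - f (T (T^[k] y)) * Real.exp (g (T^[k] y))) =
      f y - Real.exp (birkhoffSum T g n y) * f (T^[n] y) := by
  have htelescope :=
    Finset.sum_range_sub' (fun k => Real.exp (birkhoffSum T g k y) * f (T^[k] y)) n
  simp only [birkhoffSum_zero, Real.exp_zero, one_mul, Function.iterate_zero_apply] at htelescope
  rw [← htelescope]
  refine Finset.sum_congr rfl fun k _ => ?_
  rw [birkhoffSum_succ, Real.exp_add, Function.iterate_succ_apply']
  ring

lemma sum_range_exp_birkhoffSum_leftInverse {T T' : α → α} (hT : Function.LeftInverse T' T)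
    (g : α → ℝ) (M : ℕ) (y : α) :
    Real.exp (birkhoffSum T g M y) * ∑ j ∈ Finset.range M,
        Real.exp (birkhoffSum T' (fun z => -g (T' z)) j (T^[M] y)) =
      ∑ n ∈ Finset.range M, Real.exp (birkhoffSum T g (n + 1) y) := by
  rw [Finset.mul_sum, ← Finset.sum_range_reflect]
  refine Finset.sum_congr rfl fun n hn => ?_
  have hn : n < M := Finset.mem_range.1 hn
  obtain ⟨j, rfl⟩ : ∃ j, M = n + 1 + j := Nat.exists_eq_add_of_le hn
  rw [show n + 1 + j - 1 - n = j by lia, ← Real.exp_add,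
    birkhoffSum_add_birkhoffSum_leftInverse hT]

lemma one_le_mul_sum_exp_birkhoffSum_of_backward {T T' : α → α} (hT : Function.LeftInverse T' T)
    {g : α → ℝ} {ε : ℝ} (hε : 0 ≤ ε) {M N : ℕ} (hN : 0 < N) {y : α}
    (hbackward : Real.exp (birkhoffSum T' (fun z => -g (T' z)) M (T^[M] y)) ≤
      ε * ∑ n ∈ Finset.range M, Real.exp (birkhoffSum T' (fun z => -g (T' z)) n (T^[M] y))) :
    1 ≤ ε * ∑ n ∈ Finset.range (M + N), Real.exp (birkhoffSum T g n y) := by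
  set w : ℕ → ℝ := fun n => Real.exp (birkhoffSum T g n y) with hw
  have hw_nonneg (n : ℕ) : 0 ≤ w n := (Real.exp_pos _).le
  have hstart : w M * Real.exp (birkhoffSum T' (fun z => -g (T' z)) M (T^[M] y)) = 1 := by
    have hcancel := birkhoffSum_add_birkhoffSum_leftInverse hT g 0 M y
    simp only [zero_add, birkhoffSum_zero] at hcancel
    simp only [hw, ← Real.exp_add, hcancel, Real.exp_zero]
  calc
    1 ≤ w M * (ε * ∑ n ∈ Finset.range M,
          Real.exp (birkhoffSum T' (fun z => -g (T' z)) n (T^[M] y))) :=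
        hstart ▸ mul_le_mul_of_nonneg_left hbackward (hw_nonneg M)
    _ = ε * ∑ n ∈ Finset.range M, w (n + 1) := by
        rw [mul_left_comm, sum_range_exp_birkhoffSum_leftInverse hT]
    _ ≤ ε * ∑ n ∈ Finset.range (M + 1), w n := by
        rw [Finset.sum_range_succ']
        gcongr
        exact le_add_of_nonneg_right (hw_nonneg 0)
    _ ≤ ε * ∑ n ∈ Finset.range (M + N), w n := by
        gcongr
        exact hN

lemma exp_birkhoffSum_add_le_mul_sum_of_forward {T : α → α} {g : α → ℝ} {ε : ℝ} (hε : 0 ≤ ε)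
    {M N : ℕ} {y : α}
    (hforward : Real.exp (birkhoffSum T g N (T^[M] y)) ≤
      ε * ∑ n ∈ Finset.range N, Real.exp (birkhoffSum T g n (T^[M] y))) :
    Real.exp (birkhoffSum T g (M + N) y) ≤
      ε * ∑ n ∈ Finset.range (M + N), Real.exp (birkhoffSum T g n y) := by
  set w : ℕ → ℝ := fun n => Real.exp (birkhoffSum T g n y) with hw
  have hw_nonneg (n : ℕ) : 0 ≤ w n := (Real.exp_pos _).le
  have hw_add (n : ℕ) : w (M + n) = w M * Real.exp (birkhoffSum T g n (T^[M] y)) := by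
    simp only [hw, birkhoffSum_add, Real.exp_add]
  calc
    w (M + N) ≤ w M * (ε * ∑ n ∈ Finset.range N, Real.exp (birkhoffSum T g n (T^[M] y))) :=
        hw_add N ▸ mul_le_mul_of_nonneg_left hforward (hw_nonneg M)
    _ = ε * ∑ n ∈ Finset.range N, w (M + n) := by
        simp only [hw_add, Finset.mul_sum, mul_left_comm]
    _ ≤ ε * ∑ n ∈ Finset.range (M + N), w n := by
        rw [Finset.sum_range_add]
        gcongr
        exact le_add_of_nonneg_left (Finset.sum_nonneg fun n _ => hw_nonneg n)

end BirkhoffSum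

section Growth

lemma mul_one_add_pow_le_sum_range {a : ℕ → ℝ} {ε : ℝ} (hε : 0 ≤ ε)
    (ha : ∀ N, ε * ∑ n ∈ Finset.range N, a n ≤ a N) (N : ℕ) :
    a 0 * (1 + ε) ^ N ≤ ∑ n ∈ Finset.range (N + 1), a n := by
  induction N with
  | zero => simp
  | succ N ih =>
    calc
      a 0 * (1 + ε) ^ (N + 1) = (1 + ε) * (a 0 * (1 + ε) ^ N) := by ring
      _ ≤ (1 + ε) * ∑ n ∈ Finset.range (N + 1), a n := by gcongr
      _ ≤ ∑ n ∈ Finset.range (N + 2), a n := by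
        rw [Finset.sum_range_succ _ (N + 1)]
        linarith [ha (N + 1)]

lemma add_mul_log_one_add_le_of_mul_sum_exp_le {s : ℕ → ℝ} {ε : ℝ} (hε : 0 < ε)
    (hs : ∀ N, ε * ∑ n ∈ Finset.range N, Real.exp (s n) ≤ Real.exp (s N)) (N : ℕ) :
    Real.log ε + s 0 + N * Real.log (1 + ε) ≤ s (N + 1) := by
  have hexp : ε * (Real.exp (s 0) * (1 + ε) ^ N) ≤ Real.exp (s (N + 1)) :=
    (mul_le_mul_of_nonneg_left (mul_one_add_pow_le_sum_range hε.le hs N) hε.le).trans (hs (N + 1))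
  have hlog := Real.log_le_log (by positivity) hexp
  rw [Real.log_exp, Real.log_mul hε.ne' (by positivity),
    Real.log_mul (by positivity) (by positivity), Real.log_exp, Real.log_pow] at hlog
  linarith

lemma exists_exp_le_mul_sum_exp_of_liminf_nonpos {s : ℕ → ℝ}
    (hbdd : IsBoundedUnder (· ≤ ·) atTop fun k : ℕ => (k : ℝ)⁻¹ * s k)
    (hliminf : liminf (fun k : ℕ => (k : ℝ)⁻¹ * s k) atTop ≤ 0) {ε : ℝ} (hε : 0 < ε) :
    ∃ N, Real.exp (s N) ≤ ε * ∑ n ∈ Finset.range N, Real.exp (s n) := by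
  by_contra! hgrowth
  set L := Real.log (1 + ε)
  have hL_pos : 0 < L := Real.log_pos (by linarith)
  set c := Real.log ε + s 0 - L
  have hlower : Tendsto (fun k : ℕ => (k : ℝ)⁻¹ * c + L) atTop (𝓝 L) := by
    simpa using (tendsto_inv_atTop_nhds_zero_nat (𝕜 := ℝ)).mul_const c |>.add_const L
  have hle : ∀ᶠ k : ℕ in atTop, (k : ℝ)⁻¹ * c + L ≤ (k : ℝ)⁻¹ * s k := by
    filter_upwards [eventually_ge_atTop 1] with k hk
    have hk_pos : (0 : ℝ) < k := Nat.cast_pos.2 hk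
    have hlinear : c + k * L ≤ s k := by
      obtain ⟨N, rfl⟩ := Nat.exists_eq_add_of_le' hk
      have := add_mul_log_one_add_le_of_mul_sum_exp_le hε (fun N => (hgrowth N).le) N
      push_cast
      linarith
    calc
      (k : ℝ)⁻¹ * c + L = (k : ℝ)⁻¹ * (c + k * L) := by field_simp
      _ ≤ (k : ℝ)⁻¹ * s k := by gcongr
  have := liminf_le_liminf hle hlower.isBoundedUnder_ge hbdd.isCoboundedUnder_ge
  rw [hlower.liminf_eq] at this
  linarith

lemma limsup_inv_mul_nonpos_of_eventually_le_log {s : ℕ → ℝ} {A : ℝ}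
    (hbdd : IsBoundedUnder (· ≥ ·) atTop fun k : ℕ => (k : ℝ)⁻¹ * s k)
    (hs : ∀ᶠ k : ℕ in atTop, s k ≤ A * Real.log k) :
    limsup (fun k : ℕ => (k : ℝ)⁻¹ * s k) atTop ≤ 0 := by
  have hupper : Tendsto (fun k : ℕ => (k : ℝ)⁻¹ * (A * Real.log k)) atTop (𝓝 0) := by
    have hlog := Real.isLittleO_log_id_atTop.tendsto_div_nhds_zero.comp
      (tendsto_natCast_atTop_atTop (R := ℝ))
    simpa [div_eq_inv_mul, mul_left_comm] using hlog.const_mul A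
  rw [← hupper.limsup_eq]
  refine limsup_le_limsup ?_ hbdd.isCoboundedUnder_le hupper.isBoundedUnder_le
  filter_upwards [hs] with k hk
  gcongr

end Growth

section Measure

variable {X : Type*} [MeasurableSpace X]

lemma ae_eventually_le_two_mul_log_of_integral_exp_le {m : Measure X} [IsFiniteMeasure m]
    {s : ℕ → X → ℝ} {B : ℝ} (hint : ∀ k, Integrable (fun x => Real.exp (s k x)) m)
    (hB : ∀ k, ∫ x, Real.exp (s k x) ∂m ≤ B) :
    ∀ᵐ x ∂m, ∀ᶠ k : ℕ in atTop, s k x ≤ 2 * Real.log k := by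
  have hmarkov (k : ℕ) :
      m {x | 0 < k ∧ (k : ℝ) ^ 2 ≤ Real.exp (s k x)} ≤ ENNReal.ofReal (B * (1 / (k : ℝ) ^ 2)) := by
    rcases k.eq_zero_or_pos with rfl | hk
    · simp
    simp only [hk, true_and]
    refine (ENNReal.le_ofReal_iff_toReal_le (measure_ne_top _ _) ?_).2 ?_
    · have : 0 ≤ B := (integral_nonneg fun x => (Real.exp_pos _).le).trans (hB k)
      positivity
    · rw [mul_one_div, le_div_iff₀' (by positivity)]
      exact (mul_meas_ge_le_integral_of_nonneg
        (Eventually.of_forall fun x => (Real.exp_pos _).le) (hint k) _).trans (hB k)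
  have hsummable : Summable fun k : ℕ => B * (1 / (k : ℝ) ^ 2) :=
    (Real.summable_one_div_nat_pow.2 one_lt_two).mul_left B
  have hfinite : ∑' k : ℕ, m {x | 0 < k ∧ (k : ℝ) ^ 2 ≤ Real.exp (s k x)} ≠ ⊤ :=
    ne_top_of_le_ne_top hsummable.tsum_ofReal_ne_top (ENNReal.tsum_le_tsum hmarkov)
  filter_upwards [ae_eventually_notMem hfinite] with x hx
  filter_upwards [hx, eventually_gt_atTop 0] with k hk hk_pos
  have hexp : Real.exp (s k x) ≤ (k : ℝ) ^ 2 := by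
    by_contra! hlt
    exact hk ⟨hk_pos, hlt.le⟩
  simpa using Real.log_le_log (Real.exp_pos _) hexp

lemma exists_probabilityMeasure_integral_eq_centerMass {ι : Type*} (t : Finset ι) {w : ι → ℝ}
    (hw : ∀ i ∈ t, 0 ≤ w i) (hw_pos : 0 < ∑ i ∈ t, w i) (p : ι → X) :
    ∃ μ : ProbabilityMeasure X, ∀ f : X → ℝ, StronglyMeasurable f →
      ∫ x, f x ∂μ = t.centerMass w (f ∘ p) := by
  set Z := ∑ i ∈ t, w i with hZ
  refine ⟨⟨ENNReal.ofReal Z⁻¹ • ∑ i ∈ t, ENNReal.ofReal (w i) • Measure.dirac (p i), ⟨?_⟩⟩,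
    fun f hf => ?_⟩
  · simp only [Measure.smul_apply, Measure.finsetSum_apply, measure_univ, smul_eq_mul, mul_one]
    rw [← ENNReal.ofReal_sum_of_nonneg hw, ← hZ, ← ENNReal.ofReal_mul (by positivity),
      inv_mul_cancel₀ hw_pos.ne', ENNReal.ofReal_one]
  · have hint (i : ι) : Integrable f (ENNReal.ofReal (w i) • Measure.dirac (p i)) :=
      (integrable_dirac' hf (by simp)).smul_measure ENNReal.ofReal_ne_top
    rw [ProbabilityMeasure.coe_mk, integral_smul_measure,
      integral_finsetSum_measure fun i _ => hint i, ENNReal.toReal_ofReal (by positivity)]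
    refine congrArg (Z⁻¹ • ·) (Finset.sum_congr rfl fun i hi => ?_)
    rw [integral_smul_measure, integral_dirac' _ _ hf, ENNReal.toReal_ofReal (hw i hi),
      Function.comp_apply]

variable [TopologicalSpace X] [CompactSpace X] [T2Space X] [BorelSpace X]

lemma exists_probabilityMeasure_integral_eq_of_tendsto (μ : ℕ → ProbabilityMeasure X) :
    ∃ ν : ProbabilityMeasure X, ∀ (f : X → ℝ) (c : ℝ), Continuous f →
      Tendsto (fun j => ∫ x, f x ∂(μ j)) atTop (𝓝 c) → ∫ x, f x ∂ν = c := by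
  let U : Ultrafilter ℕ := Ultrafilter.of atTop
  obtain ⟨ν, -, hν⟩ := isCompact_univ.ultrafilter_le_nhds (U.map μ) (by simp)
  refine ⟨ν, fun f c hf hc => ?_⟩
  have hlim := ProbabilityMeasure.tendsto_iff_forall_integral_tendsto.1
    (show Tendsto μ U (𝓝 ν) from hν) (BoundedContinuousFunction.mkOfCompact ⟨f, hf⟩)
  exact tendsto_nhds_unique hlim (hc.mono_left (Ultrafilter.of_le _))

end Measure

section OrbitSegment

variable {X : Type*} [TopologicalSpace X] [MeasurableSpace X]

lemma exists_probabilityMeasure_abs_integral_sub_le [OpensMeasurableSpace X] {T : X → X}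
    (hT : Continuous T) {g : X → ℝ} (hg : Continuous g) {ε : ℝ} {n : ℕ} {y : X}
    (hstart : 1 ≤ ε * ∑ k ∈ Finset.range n, Real.exp (birkhoffSum T g k y))
    (hend : Real.exp (birkhoffSum T g n y) ≤
      ε * ∑ k ∈ Finset.range n, Real.exp (birkhoffSum T g k y)) :
    ∃ μ : ProbabilityMeasure X, ∀ (f : X → ℝ) (K : ℝ), Continuous f → (∀ x, |f x| ≤ K) →
      |∫ x, (f x - f (T x) * Real.exp (g x)) ∂μ| ≤ 2 * ε * K := by
  set Z := ∑ k ∈ Finset.range n, Real.exp (birkhoffSum T g k y) with hZ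
  have hZ_pos : 0 < Z := by
    refine (Finset.sum_nonneg fun k _ => (Real.exp_pos _).le).lt_of_ne fun h => ?_
    rw [hZ, ← h, mul_zero] at hstart
    exact absurd hstart (not_le.2 one_pos)
  obtain ⟨μ, hμ⟩ := exists_probabilityMeasure_integral_eq_centerMass (Finset.range n)
    (fun k _ => (Real.exp_pos (birkhoffSum T g k y)).le) hZ_pos (fun k => T^[k] y)
  refine ⟨μ, fun f K hf hK => ?_⟩
  have hK_nonneg : 0 ≤ K := (abs_nonneg _).trans (hK y)
  rw [hμ _ (Continuous.stronglyMeasurable (by fun_prop))]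
  simp only [Finset.centerMass, smul_eq_mul, Function.comp_apply,
    sum_range_exp_birkhoffSum_mul_sub, ← hZ]
  rw [abs_mul, abs_of_pos (inv_pos.2 hZ_pos), inv_mul_le_iff₀ hZ_pos]
  calc
    |f y - Real.exp (birkhoffSum T g n y) * f (T^[n] y)|
      ≤ |f y| + Real.exp (birkhoffSum T g n y) * |f (T^[n] y)| := by
        simpa only [abs_mul, Real.abs_exp] using
          abs_sub (f y) (Real.exp (birkhoffSum T g n y) * f (T^[n] y))
    _ ≤ 1 * K + Real.exp (birkhoffSum T g n y) * K := by
        rw [one_mul]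
        gcongr <;> exact hK _
    _ ≤ ε * Z * K + ε * Z * K := by gcongr
    _ = Z * (2 * ε * K) := by ring

variable [CompactSpace X] [T2Space X] [BorelSpace X] {φ : X ≃ₜ X} {F : X → ℝ} {β : ℝ}

lemma exists_isConformalMeasure_of_orbit_segments (hF : Continuous F)
    (hsegment : ∀ ε > 0, ∃ (y : X) (n : ℕ),
      1 ≤ ε * ∑ k ∈ Finset.range n, Real.exp (birkhoffSum φ (fun x => β * F x) k y) ∧
      Real.exp (birkhoffSum φ (fun x => β * F x) n y) ≤
        ε * ∑ k ∈ Finset.range n, Real.exp (birkhoffSum φ (fun x => β * F x) k y)) :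
    ∃ m : Measure X, IsConformalMeasure φ F β m := by
  have happrox (j : ℕ) : ∃ μ : ProbabilityMeasure X, ∀ (f : X → ℝ) (K : ℝ), Continuous f →
      (∀ x, |f x| ≤ K) →
        |∫ x, (f x - f (φ x) * Real.exp (β * F x)) ∂μ| ≤ 2 * (1 / ((j : ℝ) + 1)) * K := by
    obtain ⟨y, n, hstart, hend⟩ := hsegment (1 / ((j : ℝ) + 1)) Nat.one_div_pos_of_nat
    exact exists_probabilityMeasure_abs_integral_sub_le φ.continuous (by fun_prop) hstart hend
  choose μ hμ using happrox
  obtain ⟨ν, hν⟩ := exists_probabilityMeasure_integral_eq_of_tendsto μ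
  refine ⟨ν, inferInstance, fun f hf => ?_⟩
  obtain ⟨K, hK⟩ := isCompact_univ.exists_bound_of_continuousOn hf.continuousOn
  have herror : Tendsto (fun j : ℕ => 2 * (1 / ((j : ℝ) + 1)) * K) atTop (𝓝 0) := by
    simpa using ((tendsto_one_div_add_atTop_nhds_zero_nat (𝕜 := ℝ)).const_mul 2).mul_const K
  have hzero : ∫ x, (f x - f (φ x) * Real.exp (β * F x)) ∂ν = 0 :=
    hν _ _ (by fun_prop) <|
      squeeze_zero_norm (fun j => hμ j f K hf fun x => hK x (Set.mem_univ x)) herror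
  have hint {h : X → ℝ} (hh : Continuous h) : Integrable h (ν : Measure X) :=
    hh.integrable_of_hasCompactSupport (HasCompactSupport.of_compactSpace h)
  rwa [integral_sub (hint hf) (hint (by fun_prop)), sub_eq_zero] at hzero

lemma exists_isConformalMeasure_of_liminf_birkhoffAverage_nonpos (hF : Continuous F) {x : X}
    (hforward : liminf (fun k => birkhoffAverage ℝ φ (fun y => β * F y) k x) atTop ≤ 0)
    (hbackward : liminf (fun k =>
      birkhoffAverage ℝ φ.symm (fun y => -(β * F (φ.symm y))) k x) atTop ≤ 0) :
    ∃ m : Measure X, IsConformalMeasure φ F β m := by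
  refine exists_isConformalMeasure_of_orbit_segments hF fun ε hε => ?_
  obtain ⟨N, hN⟩ := exists_exp_le_mul_sum_exp_of_liminf_nonpos
    (isBoundedUnder_birkhoffAverage (by fun_prop) φ x).1 hforward hε
  obtain ⟨M, hM⟩ := exists_exp_le_mul_sum_exp_of_liminf_nonpos
    (isBoundedUnder_birkhoffAverage (by fun_prop) φ.symm x).1 hbackward hε
  obtain ⟨y, rfl⟩ : ∃ y, φ^[M] y = x := φ.surjective.iterate M x
  have hN_pos : 0 < N := Nat.pos_of_ne_zero (by rintro rfl; norm_num at hN)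
  exact ⟨y, M + N,
    one_le_mul_sum_exp_birkhoffSum_of_backward φ.symm_apply_apply hε.le hN_pos hM,
    exp_birkhoffSum_add_le_mul_sum_of_forward hε.le hN⟩

end OrbitSegment

namespace IsConformalMeasure

variable {X : Type*} [TopologicalSpace X] [MeasurableSpace X] {φ : X ≃ₜ X} {F : X → ℝ} {β : ℝ}
  {m : Measure X}

lemma symm (hm : IsConformalMeasure φ F β m) (hF : Continuous F) :
    IsConformalMeasure φ.symm (fun x => -F (φ.symm x)) β m := by
  refine ⟨hm.1, fun f hf => ?_⟩
  rw [hm.2 (fun x => f (φ.symm x) * Real.exp (β * -F (φ.symm x))) (by fun_prop)]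
  simp only [φ.symm_apply_apply, mul_assoc, ← Real.exp_add, mul_neg, neg_add_cancel, Real.exp_zero,
    mul_one]

lemma integral_exp_birkhoffSum (hm : IsConformalMeasure φ F β m) (hF : Continuous F) (k : ℕ) :
    ∫ x, Real.exp (birkhoffSum φ (fun y => β * F y) k x) ∂m = 1 := by
  have := hm.1
  induction k with
  | zero => simp
  | succ k ih =>
    rw [← ih, hm.2 _ (continuous_birkhoffSum φ.continuous (by fun_prop) k).rexp]
    simp only [birkhoffSum_succ', Real.exp_add, mul_comm]

lemma ae_limsup_birkhoffAverage_nonpos [CompactSpace X] [OpensMeasurableSpace X]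
    (hm : IsConformalMeasure φ F β m) (hF : Continuous F) :
    ∀ᵐ x ∂m, limsup (fun k => birkhoffAverage ℝ φ (fun y => β * F y) k x) atTop ≤ 0 := by
  have := hm.1
  have hint (k : ℕ) : Integrable (fun x => Real.exp (birkhoffSum φ (fun y => β * F y) k x)) m :=
    (continuous_birkhoffSum φ.continuous (by fun_prop) k).rexp.integrable_of_hasCompactSupport
      (HasCompactSupport.of_compactSpace _)
  filter_upwards [ae_eventually_le_two_mul_log_of_integral_exp_le hint
    fun k => (hm.integral_exp_birkhoffSum hF k).le] with x hx
  exact limsup_inv_mul_nonpos_of_eventually_le_log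
    (isBoundedUnder_birkhoffAverage (by fun_prop) φ x).2 hx

end IsConformalMeasure

theorem stmt0_general {X : Type*} [TopologicalSpace X] [CompactSpace X] [T2Space X]
    [MeasurableSpace X] [BorelSpace X]
    (φ : X ≃ₜ X) (F : X → ℝ) (hF : Continuous F) (β : ℝ) :
    List.TFAE
      [ ∃ m : Measure X, IsConformalMeasure φ F β m,
        ∃ x : X,
          limsup (fun k => birkhoffAverage ℝ φ (fun y => β * F y) k x) atTop ≤ 0 ∧
          limsup (fun k =>
            birkhoffAverage ℝ φ.symm (fun y => -(β * F (φ.symm y))) k x) atTop ≤ 0,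
        ∃ x : X,
          liminf (fun k => birkhoffAverage ℝ φ (fun y => β * F y) k x) atTop ≤ 0 ∧
          liminf (fun k =>
            birkhoffAverage ℝ φ.symm (fun y => -(β * F (φ.symm y))) k x) atTop ≤ 0 ] := by
  tfae_have 1 → 2 := by
    rintro ⟨m, hm⟩
    have := hm.1
    have hbackward := (hm.symm hF).ae_limsup_birkhoffAverage_nonpos (by fun_prop)
    simp only [mul_neg] at hbackward
    exact ((hm.ae_limsup_birkhoffAverage_nonpos hF).and hbackward).exists
  tfae_have 2 → 3 := by
    rintro ⟨x, hforward, hbackward⟩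
    have hbdd := isBoundedUnder_birkhoffAverage (g := fun y => β * F y) (by fun_prop) φ x
    have hbdd_symm := isBoundedUnder_birkhoffAverage (g := fun y => -(β * F (φ.symm y)))
      (by fun_prop) φ.symm x
    exact ⟨x, (liminf_le_limsup hbdd.1 hbdd.2).trans hforward,
      (liminf_le_limsup hbdd_symm.1 hbdd_symm.2).trans hbackward⟩
  tfae_have 3 → 1 := fun ⟨_, hforward, hbackward⟩ =>
    exists_isConformalMeasure_of_liminf_birkhoffAverage_nonpos hF hforward hbackward
  tfae_finish

theorem stmt0 {X : Type*} [MetricSpace X] [CompactSpace X]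
    [MeasurableSpace X] [BorelSpace X]
    (φ : X ≃ₜ X) (F : X → ℝ) (hF : Continuous F) (β : ℝ) :
    List.TFAE
      [ ∃ m : Measure X, IsConformalMeasure φ F β m,
        ∃ x : X,
          limsup (fun k : ℕ =>
              (1 / (k : ℝ)) * ∑ i ∈ Finset.range k, β * F ((φ : X → X)^[i] x)) atTop ≤ 0 ∧
          limsup (fun k : ℕ =>
              (1 / (k : ℝ)) * ∑ i ∈ Finset.range k, -(β * F ((φ.symm : X → X)^[i + 1] x))) atTop ≤ 0,
        ∃ x : X,
          liminf (fun k : ℕ =>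
              (1 / (k : ℝ)) * ∑ i ∈ Finset.range k, β * F ((φ : X → X)^[i] x)) atTop ≤ 0 ∧
          liminf (fun k : ℕ =>
              (1 / (k : ℝ)) * ∑ i ∈ Finset.range k, -(β * F ((φ.symm : X → X)^[i + 1] x))) atTop ≤ 0 ] := by
  simpa only [birkhoffAverage, birkhoffSum, smul_eq_mul, one_div, Function.iterate_succ_apply']
    using stmt0_general φ F hF β
end

section
/- Let X be a compact metric space, φ: X → X a homeomorphism, F: X → ℝ continuous and β ∈ ℝ. Assume there is a point x ∈ X and two strictly increasing sequences of natural numbers (n_i)_{i≥1} and (m_i)_{i≥1} such that lim_{i→∞} (e^{β·S_{−n_i}(F)(x)} + e^{β·S_{m_i}(F)(x)}) / (∑_{k=−n_i}^{m_i} e^{β·S_k(F)(x)}) = 0. For each i define the linear functional L_i on C(X) by L_i(f) = (∑_{k=−n_i}^{m_i} f(φ^k(x))·e^{β·S_k(F)(x)}) / (∑_{k=−n_i}^{m_i} e^{β·S_k(F)(x)}). Then there exist an e^{βF}-conformal measure m_x on X and a strictly increasing sequence (i_j)_{j≥1} of natural numbers such that lim_{j→∞} L_{i_j}(f) = ∫_X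 f dm_x for every continuous f: X → ℝ. -/
open MeasureTheory Filter Topology

/-- The iterate `φ^k` for an integer `k`. -/
noncomputable def zIter {X : Type*} [TopologicalSpace X] (φ : X ≃ₜ X) (k : ℤ) (x : X) : X :=
  if 0 ≤ k then (φ : X → X)^[k.toNat] x else (φ.symm : X → X)^[(-k).toNat] x

/-- The Birkhoff sum `S_k(F)` for `k : ℤ`:
`S_k(F) = ∑_{j=0}^{k-1} F ∘ φ^j` for `k ≥ 1`, `S_0(F) = 0`, and
`S_k(F) = −∑_{j=1}^{|k|} F ∘ φ^{−j}` for `k ≤ −1`. -/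
noncomputable def birkhoffZ {X : Type*} [TopologicalSpace X]
    (φ : X ≃ₜ X) (F : X → ℝ) (k : ℤ) (x : X) : ℝ :=
  if 0 ≤ k then ∑ j ∈ Finset.range k.toNat, F ((φ : X → X)^[j] x)
  else -∑ j ∈ Finset.range (-k).toNat, F ((φ.symm : X → X)^[j + 1] x)

/-!
Write `w k = e^{β S_k(F)(x)}`. The cocycle identity `S_{k+1} = S_k + F ∘ φ^k` says that
`w (k + 1) = e^{βF(φ^k x)} w k`, so `k ↦ f(φ^k x) w k` shifted by one is
`k ↦ (f ∘ φ · e^{βF})(φ^k x) w k`. For the probability measure `μ` with masses proportional to `w k`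
at `φ^k x`, `a ≤ k ≤ b`, the difference `∫ f dμ - ∫ (f ∘ φ) e^{βF} dμ` therefore telescopes to two
boundary terms, of size at most a constant times `(w a + w b) / ∑ w k`. When this ratio tends to
`0`, every weak limit point of the measures is conformal, and limit points exist by compactness.
-/

theorem sum_Icc_sub_add_one {G : Type*} [AddCommGroup G] (u : ℤ → G) {a b : ℤ} (hab : a ≤ b) :
    ∑ k ∈ Finset.Icc a b, (u k - u (k + 1)) = u a - u (b + 1) := by
  induction b, hab using Int.leInduction with
  | base => simp
  | succ b hab ih =>
    rw [← Finset.insert_Icc_right_eq_Icc_add_one (by omega), Finset.sum_insert (by simp), ih]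
    abel

section WeightedDirac

variable {ι X : Type*} [MeasurableSpace X]

/-- The finitely supported measure giving each point `z k`, `k ∈ s`, the normalized mass
`w k / ∑ j ∈ s, w j`. -/
noncomputable def weightedDirac (s : Finset ι) (w : ι → ℝ) (z : ι → X) : Measure X :=
  ∑ k ∈ s, ENNReal.ofReal (w k / ∑ j ∈ s, w j) • Measure.dirac (z k)

variable {s : Finset ι} {w : ι → ℝ}

theorem isProbabilityMeasure_weightedDirac (hw : ∀ k ∈ s, 0 ≤ w k) (hsum : ∑ k ∈ s, w k ≠ 0)
    (z : ι → X) : IsProbabilityMeasure (weightedDirac s w z) where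
  measure_univ := by
    have hmass : ∀ k ∈ s, 0 ≤ w k / ∑ j ∈ s, w j := fun k hk =>
      div_nonneg (hw k hk) (Finset.sum_nonneg hw)
    simp only [weightedDirac, Measure.coe_finsetSum, Finset.sum_apply, Measure.smul_apply,
      measure_univ, smul_eq_mul, mul_one]
    rw [← ENNReal.ofReal_sum_of_nonneg hmass, ← Finset.sum_div, div_self hsum, ENNReal.ofReal_one]

theorem integral_weightedDirac [MeasurableSingletonClass X] (hw : ∀ k ∈ s, 0 ≤ w k) (z : ι → X)
    (f : X → ℝ) :
    ∫ y, f y ∂weightedDirac s w z = (∑ k ∈ s, f (z k) * w k) / ∑ k ∈ s, w k := by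
  have hint : ∀ k ∈ s, Integrable f
      (ENNReal.ofReal (w k / ∑ j ∈ s, w j) • Measure.dirac (z k)) := fun k _ =>
    (integrable_dirac (by simp)).smul_measure ENNReal.ofReal_ne_top
  rw [weightedDirac, integral_finsetSum_measure hint, Finset.sum_div]
  refine Finset.sum_congr rfl fun k hk => ?_
  rw [integral_smul_measure, integral_dirac, smul_eq_mul,
    ENNReal.toReal_ofReal (div_nonneg (hw k hk) (Finset.sum_nonneg hw))]
  ring

end WeightedDirac

section WeakLimits

variable {ι X : Type*} [TopologicalSpace X] [CompactSpace X] [MeasurableSpace X]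
  [OpensMeasurableSpace X] {l : Filter ι} {μ : ι → ProbabilityMeasure X} {ν : ProbabilityMeasure X}

theorem tendsto_integral_of_continuous (hμ : Tendsto μ l (𝓝 ν)) {f : X → ℝ} (hf : Continuous f) :
    Tendsto (fun i => ∫ y, f y ∂(μ i : Measure X)) l (𝓝 (∫ y, f y ∂(ν : Measure X))) :=
  ProbabilityMeasure.tendsto_iff_forall_integral_tendsto.1 hμ
    (BoundedContinuousFunction.mkOfCompact ⟨f, hf⟩)

theorem isConformalMeasure_of_tendsto [l.NeBot] {φ : X ≃ₜ X} {F : X → ℝ} (hF : Continuous F)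
    {β : ℝ} (hμ : Tendsto μ l (𝓝 ν))
    (hdefect : ∀ f : X → ℝ, Continuous f →
      Tendsto (fun i => ∫ y, f y ∂(μ i : Measure X)
        - ∫ y, f (φ y) * Real.exp (β * F y) ∂(μ i : Measure X)) l (𝓝 0)) :
    IsConformalMeasure φ F β ν := by
  refine ⟨inferInstance, fun f hf => sub_eq_zero.1 ?_⟩
  have hg : Continuous fun y => f (φ y) * Real.exp (β * F y) := by fun_prop
  exact tendsto_nhds_unique
    ((tendsto_integral_of_continuous hμ hf).sub (tendsto_integral_of_continuous hμ hg))
    (hdefect f hf)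

end WeakLimits

section Orbit

variable {X : Type*} [TopologicalSpace X]

section Iterates

variable (φ : X ≃ₜ X) (F : X → ℝ) (x : X)

theorem zIter_natCast (n : ℕ) : zIter φ n x = φ^[n] x := by
  simp [zIter]

theorem zIter_neg_natCast (n : ℕ) : zIter φ (-n) x = φ.symm^[n] x := by
  cases n with
  | zero => simp [zIter]
  | succ n => rw [zIter, if_neg (by omega), neg_neg, Int.toNat_natCast]

theorem birkhoffZ_natCast (n : ℕ) :
    birkhoffZ φ F n x = ∑ j ∈ Finset.range n, F (φ^[j] x) := by
  simp [birkhoffZ]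

theorem birkhoffZ_neg_natCast (n : ℕ) :
    birkhoffZ φ F (-n) x = -∑ j ∈ Finset.range n, F (φ.symm^[j + 1] x) := by
  cases n with
  | zero => simp [birkhoffZ]
  | succ n => rw [birkhoffZ, if_neg (by omega), neg_neg, Int.toNat_natCast]

theorem zIter_add_one (k : ℤ) : zIter φ (k + 1) x = φ (zIter φ k x) := by
  obtain ⟨n, rfl | rfl⟩ := k.eq_nat_or_neg
  · rw [← Nat.cast_succ, zIter_natCast, zIter_natCast, Function.iterate_succ_apply']
  · cases n with
    | zero => simp [zIter]
    | succ n =>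
      rw [show -((n + 1 : ℕ) : ℤ) + 1 = -n by push_cast; ring, zIter_neg_natCast,
        zIter_neg_natCast, Function.iterate_succ_apply', Homeomorph.apply_symm_apply]

theorem birkhoffZ_add_one (k : ℤ) :
    birkhoffZ φ F (k + 1) x = birkhoffZ φ F k x + F (zIter φ k x) := by
  obtain ⟨n, rfl | rfl⟩ := k.eq_nat_or_neg
  · rw [← Nat.cast_succ, birkhoffZ_natCast, birkhoffZ_natCast, zIter_natCast,
      Finset.sum_range_succ]
  · cases n with
    | zero => simp [zIter, birkhoffZ]
    | succ n =>
      rw [show -((n + 1 : ℕ) : ℤ) + 1 = -n by push_cast; ring, birkhoffZ_neg_natCast,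
        birkhoffZ_neg_natCast, zIter_neg_natCast, Finset.sum_range_succ]
      ring

end Iterates

/-- The weight `e^{β S_k(F)(x)}` of the point `φ^k x` in the orbit averages. -/
noncomputable def orbitWeight (φ : X ≃ₜ X) (F : X → ℝ) (β : ℝ) (x : X) (k : ℤ) : ℝ :=
  Real.exp (β * birkhoffZ φ F k x)

/-- The measure representing the average over the orbit points `φ^k x`, `k ∈ s`, with weights
`e^{β S_k(F)(x)}`; the functional `L_i` is integration against it for `s = [-n_i, m_i]`. -/
noncomputable def orbitMeasure [MeasurableSpace X] (φ : X ≃ₜ X) (F : X → ℝ) (β : ℝ) (x : X)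
    (s : Finset ℤ) : Measure X :=
  weightedDirac s (orbitWeight φ F β x) fun k => zIter φ k x

variable (φ : X ≃ₜ X) (F : X → ℝ) (β : ℝ) (x : X)

theorem orbitWeight_pos (k : ℤ) : 0 < orbitWeight φ F β x k :=
  Real.exp_pos _

theorem orbitWeight_add_one (k : ℤ) :
    orbitWeight φ F β x (k + 1) = Real.exp (β * F (zIter φ k x)) * orbitWeight φ F β x k := by
  rw [orbitWeight, birkhoffZ_add_one, mul_add, Real.exp_add, mul_comm, orbitWeight]

variable [MeasurableSpace X]

theorem isProbabilityMeasure_orbitMeasure {s : Finset ℤ} (hs : s.Nonempty) :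
    IsProbabilityMeasure (orbitMeasure φ F β x s) :=
  isProbabilityMeasure_weightedDirac (fun k _ => (orbitWeight_pos φ F β x k).le)
    (Finset.sum_pos (fun k _ => orbitWeight_pos φ F β x k) hs).ne' _

variable [MeasurableSingletonClass X]

theorem integral_orbitMeasure (s : Finset ℤ) (f : X → ℝ) :
    ∫ y, f y ∂orbitMeasure φ F β x s =
      (∑ k ∈ s, f (zIter φ k x) * orbitWeight φ F β x k) / ∑ k ∈ s, orbitWeight φ F β x k :=
  integral_weightedDirac (fun k _ => (orbitWeight_pos φ F β x k).le) _ f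

theorem integral_orbitMeasure_sub_integral_comp_mul_exp {a b : ℤ} (hab : a ≤ b) (f : X → ℝ) :
    ∫ y, f y ∂orbitMeasure φ F β x (Finset.Icc a b)
        - ∫ y, f (φ y) * Real.exp (β * F y) ∂orbitMeasure φ F β x (Finset.Icc a b) =
      (f (zIter φ a x) * orbitWeight φ F β x a
        - f (φ (zIter φ b x)) * Real.exp (β * F (zIter φ b x)) * orbitWeight φ F β x b) /
        ∑ k ∈ Finset.Icc a b, orbitWeight φ F β x k := by
  have hshift : ∀ k, f (φ (zIter φ k x)) * Real.exp (β * F (zIter φ k x)) * orbitWeight φ F β x k =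
      f (zIter φ (k + 1) x) * orbitWeight φ F β x (k + 1) := fun k => by
    rw [zIter_add_one, orbitWeight_add_one, mul_assoc]
  simp only [integral_orbitMeasure, hshift]
  rw [← sub_div, ← Finset.sum_sub_distrib,
    sum_Icc_sub_add_one (fun k => f (zIter φ k x) * orbitWeight φ F β x k) hab]

variable {φ F β x}

theorem abs_integral_orbitMeasure_sub_le {a b : ℤ} (hab : a ≤ b) {f : X → ℝ} {C : ℝ}
    (hf : ∀ y, |f y| ≤ C) (hg : ∀ y, |f (φ y) * Real.exp (β * F y)| ≤ C) :
    |∫ y, f y ∂orbitMeasure φ F β x (Finset.Icc a b)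
        - ∫ y, f (φ y) * Real.exp (β * F y) ∂orbitMeasure φ F β x (Finset.Icc a b)| ≤
      C * ((orbitWeight φ F β x a + orbitWeight φ F β x b) /
        ∑ k ∈ Finset.Icc a b, orbitWeight φ F β x k) := by
  have hw : ∀ k, 0 ≤ orbitWeight φ F β x k := fun k => (orbitWeight_pos φ F β x k).le
  have hsum : 0 ≤ ∑ k ∈ Finset.Icc a b, orbitWeight φ F β x k := Finset.sum_nonneg fun k _ => hw k
  rw [integral_orbitMeasure_sub_integral_comp_mul_exp φ F β x hab, abs_div, abs_of_nonneg hsum,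
    ← mul_div_assoc]
  gcongr
  calc |f (zIter φ a x) * orbitWeight φ F β x a
        - f (φ (zIter φ b x)) * Real.exp (β * F (zIter φ b x)) * orbitWeight φ F β x b|
      ≤ |f (zIter φ a x)| * orbitWeight φ F β x a
        + |f (φ (zIter φ b x)) * Real.exp (β * F (zIter φ b x))| * orbitWeight φ F β x b := by
        refine (abs_sub _ _).trans_eq ?_
        rw [abs_mul _ (orbitWeight φ F β x a), abs_mul _ (orbitWeight φ F β x b),
          abs_of_nonneg (hw a), abs_of_nonneg (hw b)]
    _ ≤ C * (orbitWeight φ F β x a + orbitWeight φ F β x b) := by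
        rw [mul_add]
        gcongr
        exacts [hw a, hf _, hw b, hg _]

theorem tendsto_integral_orbitMeasure_sub [CompactSpace X] (hF : Continuous F) {ι : Type*}
    {l : Filter ι} {a b : ι → ℤ} (hab : ∀ i, a i ≤ b i)
    (hlim : Tendsto (fun i => (orbitWeight φ F β x (a i) + orbitWeight φ F β x (b i)) /
      ∑ k ∈ Finset.Icc (a i) (b i), orbitWeight φ F β x k) l (𝓝 0))
    {f : X → ℝ} (hf : Continuous f) :
    Tendsto (fun i => ∫ y, f y ∂orbitMeasure φ F β x (Finset.Icc (a i) (b i))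
      - ∫ y, f (φ y) * Real.exp (β * F y) ∂orbitMeasure φ F β x (Finset.Icc (a i) (b i)))
      l (𝓝 0) := by
  have hg : Continuous fun y => f (φ y) * Real.exp (β * F y) := by fun_prop
  obtain ⟨C, hC⟩ := isCompact_univ.exists_bound_of_continuousOn hf.continuousOn
  obtain ⟨D, hD⟩ := isCompact_univ.exists_bound_of_continuousOn hg.continuousOn
  have hbound := hlim.const_mul (max C D)
  rw [mul_zero] at hbound
  exact squeeze_zero_norm (fun i => abs_integral_orbitMeasure_sub_le (hab i)
    (fun y => (hC y trivial).trans (le_max_left C D))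
    (fun y => (hD y trivial).trans (le_max_right C D))) hbound

end Orbit

theorem stmt1_general {X : Type*} [TopologicalSpace X] [TopologicalSpace.MetrizableSpace X]
    [CompactSpace X] [MeasurableSpace X] [BorelSpace X]
    (φ : X ≃ₜ X) {F : X → ℝ} (hF : Continuous F) (β : ℝ) (x : X)
    (a b : ℕ → ℤ) (hab : ∀ i, a i ≤ b i)
    (hlim : Tendsto (fun i => (orbitWeight φ F β x (a i) + orbitWeight φ F β x (b i)) /
      ∑ k ∈ Finset.Icc (a i) (b i), orbitWeight φ F β x k) atTop (𝓝 0)) :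
    ∃ (mx : Measure X) (ij : ℕ → ℕ), IsConformalMeasure φ F β mx ∧ StrictMono ij ∧
      ∀ f : X → ℝ, Continuous f →
        Tendsto (fun j => (∑ k ∈ Finset.Icc (a (ij j)) (b (ij j)),
            f (zIter φ k x) * orbitWeight φ F β x k) /
            ∑ k ∈ Finset.Icc (a (ij j)) (b (ij j)), orbitWeight φ F β x k)
          atTop (𝓝 (∫ y, f y ∂mx)) := by
  let μ (i : ℕ) : ProbabilityMeasure X := ⟨orbitMeasure φ F β x (Finset.Icc (a i) (b i)),
    isProbabilityMeasure_orbitMeasure φ F β x (Finset.nonempty_Icc.2 (hab i))⟩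
  obtain ⟨ν, ij, hij, hν⟩ := CompactSpace.tendsto_subseq μ
  refine ⟨ν, ij, isConformalMeasure_of_tendsto hF hν fun f hf => ?_, hij, fun f hf => ?_⟩
  · exact (tendsto_integral_orbitMeasure_sub hF hab hlim hf).comp hij.tendsto_atTop
  · exact (tendsto_integral_of_continuous hν hf).congr fun j => integral_orbitMeasure φ F β x _ f

theorem stmt1 {X : Type*} [MetricSpace X] [CompactSpace X]
    [MeasurableSpace X] [BorelSpace X]
    (φ : X ≃ₜ X) (F : X → ℝ) (hF : Continuous F) (β : ℝ)
    (x : X) (n m : ℕ → ℕ) (hn : StrictMono n) (hm : StrictMono m)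
    (hlim : Tendsto (fun i : ℕ =>
        (Real.exp (β * birkhoffZ φ F (-(n i : ℤ)) x) + Real.exp (β * birkhoffZ φ F (m i : ℤ) x)) /
          ∑ k ∈ Finset.Icc (-(n i : ℤ)) (m i : ℤ), Real.exp (β * birkhoffZ φ F k x))
      atTop (nhds 0)) :
    ∃ (mx : Measure X) (ij : ℕ → ℕ), IsConformalMeasure φ F β mx ∧ StrictMono ij ∧
      ∀ f : X → ℝ, Continuous f →
        Tendsto (fun j : ℕ =>
            (∑ k ∈ Finset.Icc (-(n (ij j) : ℤ)) (m (ij j) : ℤ),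
                f (zIter φ k x) * Real.exp (β * birkhoffZ φ F k x)) /
              ∑ k ∈ Finset.Icc (-(n (ij j) : ℤ)) (m (ij j) : ℤ),
                Real.exp (β * birkhoffZ φ F k x))
          atTop (nhds (∫ y, f y ∂mx)) := by
  exact stmt1_general φ hF β x (fun i => -(n i : ℤ)) (fun i => (m i : ℤ)) (fun i => by omega) hlim
end

section
/- Let X be a compact metric space, φ: X → X a homeomorphism and F: X → ℝ continuous. If there exists a φ-ergodic, φ-invariant Borel probability measure ν on X with ∫_X F dν = 0, then for every β ∈ ℝ there exists an e^{βF}-conformal measure for φ. -/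
open MeasureTheory Filter Topology

/-- A measure `ν` is `φ`-invariant if `ν(φ⁻¹(B)) = ν(B)` for all Borel sets `B`. -/
def IsInvariantMeasure {X : Type*} [TopologicalSpace X] [MeasurableSpace X]
    (φ : X ≃ₜ X) (ν : Measure X) : Prop :=
  ∀ B : Set X, MeasurableSet B → ν ((φ : X → X) ⁻¹' B) = ν B

/-- A measure `m` is `φ`-ergodic if every Borel set `B` with `φ⁻¹(B) = B` satisfies
`m(B) = 0` or `m(X \ B) = 0`. -/
def IsErgodicMeasure {X : Type*} [TopologicalSpace X] [MeasurableSpace X]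
    (φ : X ≃ₜ X) (m : Measure X) : Prop :=
  ∀ B : Set X, MeasurableSet B → (φ : X → X) ⁻¹' B = B → m B = 0 ∨ m Bᶜ = 0

/-!
Put `T f = (f ∘ φ) e^{βF}`. A conformal measure is a probability measure annihilating the subspace
`{T f - f}` of `C(X, ℝ)`. By Hahn–Banach, applied to the sublinear functional `f ↦ sup f`, and the
Riesz representation theorem it exists unless `T f < f` everywhere for some continuous `f`. In that
case `{f ≤ 0}` is mapped into itself by `φ`, so by ergodicity `f > 0` or `f ≤ 0` almost everywhere.
Either way `|f|` is essentially bounded away from `0`, and integrating the logarithm of the strict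
inequality against `ν` contradicts invariance and `∫ F dν = 0`.
-/

section PositiveFunctional

variable {X : Type*} [TopologicalSpace X] [CompactSpace X]

theorem exists_positiveLinearMap_map_one_eq_one_of_exists_nonneg (V : Submodule ℝ C(X, ℝ))
    (hV : ∀ f ∈ V, ∃ x, 0 ≤ f x) :
    ∃ Λ : C(X, ℝ) →ₚ[ℝ] ℝ, Λ 1 = 1 ∧ ∀ f ∈ V, Λ f = 0 := by
  obtain ⟨x₀, -⟩ := hV 0 V.zero_mem
  have : Nonempty X := ⟨x₀⟩
  have apply_le_iSup (f : C(X, ℝ)) (x : X) : f x ≤ ⨆ y, f y :=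
    le_ciSup (isCompact_range f.continuous).bddAbove x
  obtain ⟨l, hlV, hl_le⟩ := exists_extension_of_le_sublinear ⟨V, 0⟩ (fun f : C(X, ℝ) ↦ ⨆ x, f x)
    (fun c hc f ↦ (Real.mul_iSup_of_nonneg hc.le f).symm)
    (fun f g ↦ ciSup_le fun x ↦ add_le_add (apply_le_iSup f x) (apply_le_iSup g x))
    (fun f ↦ let ⟨x, hx⟩ := hV f f.2; hx.trans (apply_le_iSup f x))
  have l_le_of_forall_le {f : C(X, ℝ)} {c : ℝ} (hf : ∀ x, f x ≤ c) : l f ≤ c :=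
    (hl_le f).trans (ciSup_le hf)
  have l_nonneg (f : C(X, ℝ)) (hf : 0 ≤ f) : 0 ≤ l f := by
    have : l (-f) ≤ 0 := l_le_of_forall_le fun x ↦ neg_nonpos.2 (hf x)
    rwa [map_neg, neg_nonpos] at this
  have l_one : l 1 = 1 := by
    have : l (-1) ≤ -1 := l_le_of_forall_le fun _ ↦ le_rfl
    rw [map_neg, neg_le_neg_iff] at this
    exact this.antisymm' (l_le_of_forall_le fun _ ↦ le_rfl)
  exact ⟨.mk₀ l l_nonneg, l_one, fun f hf ↦ hlV ⟨f, hf⟩⟩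

variable [T2Space X] [MeasurableSpace X] [BorelSpace X]

theorem exists_isFiniteMeasure_integral_eq (Λ : C(X, ℝ) →ₚ[ℝ] ℝ) :
    ∃ m : Measure X, IsFiniteMeasure m ∧ ∀ f : C(X, ℝ), ∫ x, f x ∂m = Λ f := by
  let Λc : CompactlySupportedContinuousMap X ℝ →ₚ[ℝ] ℝ := .mk₀
    { toFun f := Λ f.toContinuousMap
      map_add' f g := map_add Λ f.toContinuousMap g.toContinuousMap
      map_smul' c f := map_smul Λ c f.toContinuousMap }
    fun f hf ↦ Λ.map_nonneg (x := f.toContinuousMap) hf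
  exact ⟨RealRMK.rieszMeasure Λc, inferInstance, fun f ↦
    RealRMK.integral_rieszMeasure Λc (CompactlySupportedContinuousMap.continuousMapEquiv f)⟩

theorem exists_isProbabilityMeasure_integral_eq_zero (V : Submodule ℝ C(X, ℝ))
    (hV : ∀ f ∈ V, ∃ x, 0 ≤ f x) :
    ∃ m : Measure X, IsProbabilityMeasure m ∧ ∀ f ∈ V, ∫ x, f x ∂m = 0 := by
  obtain ⟨Λ, hΛ_one, hΛV⟩ := exists_positiveLinearMap_map_one_eq_one_of_exists_nonneg V hV
  obtain ⟨m, -, hm⟩ := exists_isFiniteMeasure_integral_eq Λ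
  refine ⟨m, ⟨?_⟩, fun f hf ↦ (hm f).trans (hΛV f hf)⟩
  have : m.real Set.univ = 1 := by simpa [hΛ_one] using hm 1
  exact (ENNReal.toReal_eq_one_iff _).1 this

theorem exists_isProbabilityMeasure_integral_map_eq (T : C(X, ℝ) →ₗ[ℝ] C(X, ℝ))
    (hT : ∀ f, ∃ x, f x ≤ T f x) :
    ∃ m : Measure X, IsProbabilityMeasure m ∧ ∀ f, ∫ x, T f x ∂m = ∫ x, f x ∂m := by
  obtain ⟨m, hm, hmV⟩ := exists_isProbabilityMeasure_integral_eq_zero (T - 1).range (by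
    rintro _ ⟨f, rfl⟩
    exact (hT f).imp fun _ ↦ sub_nonneg.2)
  have integrable (f : C(X, ℝ)) : Integrable f m :=
    f.continuous.integrable_of_hasCompactSupport (.of_compactSpace f)
  refine ⟨m, hm, fun f ↦ sub_eq_zero.1 ?_⟩
  rw [← integral_sub (integrable _) (integrable _)]
  exact hmV _ ⟨f, rfl⟩

end PositiveFunctional

section StrictInequality

variable {X : Type*} [MeasurableSpace X] {ν : Measure X}

theorem integrable_log_of_ae_le [TopologicalSpace X] [CompactSpace X] [OpensMeasurableSpace X]
    [IsFiniteMeasure ν] {f : X → ℝ} {c : ℝ} (hf : Continuous f) (hc : 0 < c)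
    (hcf : ∀ᵐ x ∂ν, c ≤ f x) :
    Integrable (fun x ↦ Real.log (f x)) ν := by
  have hcont : Continuous fun x ↦ Real.log (max c (f x)) :=
    (continuous_const.max hf).log fun x ↦ (lt_max_of_lt_left hc).ne'
  refine (hcont.integrable_of_hasCompactSupport (.of_compactSpace _)).congr ?_
  filter_upwards [hcf] with x hx
  rw [max_eq_right hx]

variable [NeZero ν] {φ : X → X}

theorem not_ae_comp_add_lt {u G : X → ℝ} (hφ : MeasurePreserving φ ν ν) (hu : Integrable u ν)
    (hG : Integrable G ν) (hint : ∫ x, G x ∂ν = 0) :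
    ¬∀ᵐ x ∂ν, u (φ x) + G x < u x := by
  intro hlt
  have huφ : Integrable (fun x ↦ u (φ x)) ν := hφ.integrable_comp_of_integrable hu
  have hint_comp : ∫ x, u (φ x) ∂ν = ∫ x, u x ∂ν := by
    have := integral_map hφ.aemeasurable (hφ.map_eq.symm ▸ hu.aestronglyMeasurable)
    rwa [hφ.map_eq, eq_comm] at this
  have hint_eq : ∫ x, u (φ x) + G x ∂ν = ∫ x, u x ∂ν := by
    rw [integral_add huφ hG, hint_comp, hint, add_zero]
  have hae_eq := (integral_eq_iff_of_ae_le (huφ.add hG) hu (hlt.mono fun _ ↦ le_of_lt)).1 hint_eq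
  obtain ⟨x, hx_lt, hx_eq⟩ := (hlt.and hae_eq).exists
  exact hx_lt.ne hx_eq

variable [TopologicalSpace X] [CompactSpace X] [OpensMeasurableSpace X] [IsFiniteMeasure ν]
  {f G : X → ℝ}

theorem not_ae_pos_of_comp_mul_exp_lt (hφc : Continuous φ) (hφ : MeasurePreserving φ ν ν)
    (hf : Continuous f) (hG : Continuous G) (hint : ∫ x, G x ∂ν = 0)
    (hlt : ∀ x, f (φ x) * Real.exp (G x) < f x) : ¬∀ᵐ x ∂ν, 0 < f x := by
  intro hpos
  have hpos_comp : ∀ᵐ x ∂ν, 0 < f (φ x) := hφ.quasiMeasurePreserving.ae hpos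
  obtain ⟨ε, hε, hε_le⟩ := isCompact_univ.exists_forall_le'
    (f := fun x ↦ f x - f (φ x) * Real.exp (G x)) (by fun_prop) fun x _ ↦ sub_pos.2 (hlt x)
  have hεf : ∀ᵐ x ∂ν, ε ≤ f x := by
    filter_upwards [hpos_comp] with x hx
    linarith [hε_le x trivial, mul_pos hx (Real.exp_pos (G x))]
  refine not_ae_comp_add_lt hφ (integrable_log_of_ae_le hf hε hεf)
    (hG.integrable_of_hasCompactSupport (.of_compactSpace G)) hint ?_
  filter_upwards [hpos_comp] with x hx
  rw [← Real.log_exp (G x), ← Real.log_mul hx.ne' (Real.exp_ne_zero _)]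
  exact Real.log_lt_log (by positivity) (hlt x)

theorem not_ae_nonpos_of_comp_mul_exp_lt (hφc : Continuous φ) (hφ : MeasurePreserving φ ν ν)
    (hf : Continuous f) (hG : Continuous G) (hint : ∫ x, G x ∂ν = 0)
    (hlt : ∀ x, f (φ x) * Real.exp (G x) < f x) : ¬∀ᵐ x ∂ν, f x ≤ 0 := by
  intro hnonpos
  obtain ⟨ε, hε, hε_le⟩ := isCompact_univ.exists_forall_le'
    (f := fun x ↦ f x * Real.exp (-G x) - f (φ x)) (by fun_prop) fun x _ ↦ by
      rw [Real.exp_neg, ← div_eq_mul_inv, sub_pos, lt_div_iff₀ (Real.exp_pos _)]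
      exact hlt x
  have hεf_comp : ∀ᵐ x ∂ν, ε ≤ -f (φ x) := by
    filter_upwards [hnonpos] with x hx
    linarith [hε_le x trivial, mul_nonpos_of_nonpos_of_nonneg hx (Real.exp_pos (-G x)).le]
  have hεf : ∀ᵐ x ∂ν, ε ≤ -f x := by
    rw [← hφ.map_eq]
    exact (ae_map_iff hφ.aemeasurable
      (isClosed_le continuous_const hf.neg).measurableSet).2 hεf_comp
  refine not_ae_comp_add_lt hφ (integrable_log_of_ae_le hf.neg hε hεf).neg
    (hG.integrable_of_hasCompactSupport (.of_compactSpace G)).neg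
    (by rw [integral_neg', hint, neg_zero]) ?_
  filter_upwards [hεf, hεf_comp] with x hx hx_comp
  have hlog : Real.log (-f x) < Real.log (-f (φ x) * Real.exp (G x)) :=
    Real.log_lt_log (hε.trans_le hx) (by linarith [hlt x])
  rw [Real.log_mul (hε.trans_le hx_comp).ne' (Real.exp_ne_zero _), Real.log_exp] at hlog
  simp only [Pi.neg_apply]
  linarith

theorem exists_le_comp_mul_exp (hφc : Continuous φ) (hφ : Ergodic φ ν) (hf : Continuous f)
    (hG : Continuous G) (hint : ∫ x, G x ∂ν = 0) : ∃ x, f x ≤ f (φ x) * Real.exp (G x) := by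
  by_contra! hlt
  have hsub : {x | f x ≤ 0} ⊆ φ ⁻¹' {x | f x ≤ 0} := fun x (hx : f x ≤ 0) ↦
    nonpos_of_mul_nonpos_left ((hlt x).le.trans hx) (Real.exp_pos (G x))
  rcases hφ.ae_empty_or_univ_of_ae_le_preimage
    (isClosed_le hf continuous_const).measurableSet.nullMeasurableSet hsub.eventuallyLE
    with hempty | huniv
  · refine not_ae_pos_of_comp_mul_exp_lt hφc hφ.toMeasurePreserving hf hG hint hlt ?_
    simpa using measure_eq_zero_iff_ae_notMem.1 (ae_eq_empty.1 hempty)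
  · exact not_ae_nonpos_of_comp_mul_exp_lt hφc hφ.toMeasurePreserving hf hG hint hlt
      (eventuallyEq_univ.1 huniv)

end StrictInequality

section InvariantMeasure

variable {X : Type*} [TopologicalSpace X] [MeasurableSpace X] [BorelSpace X] {φ : X ≃ₜ X}
  {ν : Measure X}

theorem IsInvariantMeasure.measurePreserving (hinv : IsInvariantMeasure φ ν) :
    MeasurePreserving φ ν ν :=
  ⟨φ.measurable, Measure.ext fun s hs ↦ (Measure.map_apply φ.measurable hs).trans (hinv s hs)⟩

theorem IsErgodicMeasure.ergodic (herg : IsErgodicMeasure φ ν) (hinv : IsInvariantMeasure φ ν) :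
    Ergodic φ ν where
  toMeasurePreserving := hinv.measurePreserving
  aeconst_set s hs hφs := eventuallyConst_set'.2 <|
    (herg s hs hφs).imp ae_eq_empty.2 ae_eq_univ.2

end InvariantMeasure

/-- The weighted composition operator `f ↦ (f ∘ φ) w` on `C(X, ℝ)`, whose invariant probability
measures are the conformal measures when `w = e^{βF}`. -/
def weightedComposition {X : Type*} [TopologicalSpace X] (φ : C(X, X)) (w : C(X, ℝ)) :
    C(X, ℝ) →ₗ[ℝ] C(X, ℝ) :=
  LinearMap.mulRight ℝ w ∘ₗ (ContinuousMap.compRightAlgHom ℝ ℝ φ).toLinearMap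

theorem stmt5_general {X : Type*} [TopologicalSpace X] [T2Space X] [CompactSpace X]
    [MeasurableSpace X] [BorelSpace X] {φ : X → X} (hφc : Continuous φ) {F : X → ℝ}
    (hF : Continuous F) {ν : Measure X} [IsFiniteMeasure ν] [NeZero ν] (hφ : Ergodic φ ν)
    (hint : ∫ x, F x ∂ν = 0) (β : ℝ) :
    ∃ m : Measure X, IsProbabilityMeasure m ∧ ∀ f : X → ℝ, Continuous f →
      ∫ x, f x ∂m = ∫ x, f (φ x) * Real.exp (β * F x) ∂m := by
  have hintβ : ∫ x, β * F x ∂ν = 0 := by rw [integral_const_mul, hint, mul_zero]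
  obtain ⟨m, hm, hmT⟩ := exists_isProbabilityMeasure_integral_map_eq
    (weightedComposition ⟨φ, hφc⟩ ⟨fun x ↦ Real.exp (β * F x), by fun_prop⟩)
    fun f ↦ exists_le_comp_mul_exp hφc hφ f.continuous (by fun_prop) hintβ
  exact ⟨m, hm, fun f hf ↦ (hmT ⟨f, hf⟩).symm⟩

theorem stmt5 {X : Type*} [MetricSpace X] [CompactSpace X]
    [MeasurableSpace X] [BorelSpace X]
    (φ : X ≃ₜ X) (F : X → ℝ) (hF : Continuous F)
    (ν : Measure X) (hprob : IsProbabilityMeasure ν)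
    (hinv : IsInvariantMeasure φ ν) (herg : IsErgodicMeasure φ ν)
    (hint : ∫ x, F x ∂ν = 0) :
    ∀ β : ℝ, ∃ m : Measure X, IsConformalMeasure φ F β m :=
  stmt5_general φ.continuous hF (herg.ergodic hinv) hint
end

section
/- Let X be a compact metric space, φ: X → X a homeomorphism and F: X → ℝ continuous. The following are equivalent: (a) ∫_X F dν = 0 for every φ-invariant Borel probability measure ν on X; (b) there is a sequence (h_n)_{n≥1} of continuous real-valued functions on X such that h_n ∘ φ − h_n converges uniformly on X to F as n → ∞. -/
open MeasureTheory Filter Topology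

/-!
Integrating a coboundary `h ∘ T - h` against an invariant measure gives `0`, and this survives
uniform limits. Conversely, the negated Cesàro means of the Birkhoff sums of `F` have coboundaries
`F - Aₙ F`, where `Aₙ F` is the `n`-th Birkhoff average, so it is enough that `Aₙ F → 0` uniformly.
Along any ultrafilter of pairs `(n, x)` with `n → ∞`, the empirical measures of the orbit segments
`x, …, Tⁿ x` converge weakly, by compactness, to a measure which is invariant (Krylov–Bogolyubov);
hence `Aₙ F x` converges to the integral of `F` against it, which is `0`.
-/

section UniformConvergence

variable {α β : Type*} [UniformSpace β] {c : β}

theorem tendstoUniformly_const_iff_tendsto {ι : Type*} {p : Filter ι} {G : ι → α → β} :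
    TendstoUniformly G (fun _ ↦ c) p ↔
      Tendsto (fun q : ι × α ↦ G q.1 q.2) (p ×ˢ ⊤) (𝓝 c) :=
  tendsto_prod_top_iff.symm

theorem tendsto_apply_of_tendstoUniformly_const {ι κ : Type*} {p : Filter ι} {l : Filter κ}
    {G : ι → α → β} (hG : TendstoUniformly G (fun _ ↦ c) p) {N : κ → ι} (hN : Tendsto N l p)
    (x : κ → α) : Tendsto (fun k ↦ G (N k) (x k)) l (𝓝 c) :=
  (tendstoUniformly_const_iff_tendsto.1 hG).comp (hN.prodMk tendsto_top)

theorem tendstoUniformly_add_atTop_iff_nat {G : ℕ → α → β} {g : α → β} (k : ℕ) :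
    TendstoUniformly (fun n ↦ G (n + k)) g atTop ↔ TendstoUniformly G g atTop := by
  refine forall₂_congr fun u _ ↦ ?_
  conv_rhs => rw [← map_add_atTop_eq_nat k, eventually_map]

end UniformConvergence

section BirkhoffAverage

variable {α E : Type*}

theorem birkhoffAverage_comp_self (R : Type*) [DivisionSemiring R] [AddCommMonoid E] [Module R E]
    (f : α → α) (g : α → E) (n : ℕ) (x : α) :
    birkhoffAverage R f (g ∘ f) n x = birkhoffAverage R f g n (f x) := by
  simp only [birkhoffAverage, birkhoffSum, Function.comp_apply,
    ← Function.iterate_succ_apply' f, Function.iterate_succ_apply]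

theorem tendstoUniformly_birkhoffAverage_apply_sub (𝕜 : Type*) [RCLike 𝕜] [NormedAddCommGroup E]
    [NormedSpace 𝕜 E] (f : α → α) {g : α → E} (hg : Bornology.IsBounded (Set.range g)) :
    TendstoUniformly (fun n x ↦ birkhoffAverage 𝕜 f g n (f x) - birkhoffAverage 𝕜 f g n x)
      (fun _ ↦ 0) atTop := by
  obtain ⟨C, hC⟩ := Metric.isBounded_range_iff.1 hg
  have hCn : Tendsto (fun n : ℕ ↦ C / n) atTop (𝓝 0) :=
    tendsto_const_nhds.div_atTop tendsto_natCast_atTop_atTop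
  refine Metric.tendstoUniformly_iff.2 fun ε hε ↦ ?_
  filter_upwards [hCn.eventually_lt_const hε] with n hn x
  calc dist 0 (birkhoffAverage 𝕜 f g n (f x) - birkhoffAverage 𝕜 f g n x)
      = dist (g (f^[n] x)) (g x) / n := by
        rw [dist_zero_left, ← dist_eq_norm, dist_birkhoffAverage_apply_birkhoffAverage]
    _ ≤ C / n := by gcongr; exact hC _ _
    _ < ε := hn

end BirkhoffAverage

section Transfer

variable {α M : Type*} (R : Type*) [DivisionRing R] [AddCommGroup M] [Module R M]

/-- The negated Cesàro mean of the first `n` Birkhoff sums of `g`, an approximate solution `h` of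
the cohomological equation `h ∘ f - h = g`. -/
def approxTransfer (f : α → α) (g : α → M) (n : ℕ) (x : α) : M :=
  -((n : R)⁻¹ • ∑ k ∈ Finset.range n, birkhoffSum f g k x)

theorem approxTransfer_apply_sub (f : α → α) (g : α → M) {n : ℕ} (hn : (n : R) ≠ 0) (x : α) :
    approxTransfer R f g n (f x) - approxTransfer R f g n x =
      g x - birkhoffAverage R f g n x := by
  have sum_sub : ∑ k ∈ Finset.range n, birkhoffSum f g k (f x) -
      ∑ k ∈ Finset.range n, birkhoffSum f g k x = birkhoffSum f g n x - (n : R) • g x := by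
    simp_rw [← Finset.sum_sub_distrib, birkhoffSum_apply_sub_birkhoffSum]
    rw [Finset.sum_sub_distrib, Finset.sum_const, Finset.card_range, Nat.cast_smul_eq_nsmul,
      birkhoffSum]
  rw [approxTransfer, approxTransfer, neg_sub_neg, ← neg_sub, ← smul_sub, sum_sub, smul_sub,
    inv_smul_smul₀ hn, neg_sub, birkhoffAverage]

theorem continuous_approxTransfer [TopologicalSpace α] [TopologicalSpace M]
    [IsTopologicalAddGroup M] [ContinuousConstSMul R M] {f : α → α} {g : α → M}
    (hf : Continuous f) (hg : Continuous g) (n : ℕ) : Continuous (approxTransfer R f g n) := by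
  have continuous_birkhoffSum (k : ℕ) : Continuous (birkhoffSum f g k) :=
    continuous_finsetSum _ fun i _ ↦ hg.comp (hf.iterate i)
  unfold approxTransfer
  fun_prop

end Transfer

theorem tendstoUniformly_approxTransfer_apply_sub {α E : Type*} (𝕜 : Type*) [RCLike 𝕜]
    [NormedAddCommGroup E] [NormedSpace 𝕜 E] {f : α → α} {g : α → E}
    (h : TendstoUniformly (birkhoffAverage 𝕜 f g) (fun _ ↦ 0) atTop) :
    TendstoUniformly (fun n x ↦ approxTransfer 𝕜 f g n (f x) - approxTransfer 𝕜 f g n x)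
      g atTop := by
  refine Metric.tendstoUniformly_iff.2 fun ε hε ↦ ?_
  filter_upwards [Metric.tendstoUniformly_iff.1 h ε hε, eventually_ne_atTop 0] with n hn hn0 x
  rw [approxTransfer_apply_sub 𝕜 f g (Nat.cast_ne_zero.2 hn0), dist_self_sub_right]
  simpa using hn x

section Integral

variable {α E : Type*} [MeasurableSpace α] [NormedAddCommGroup E] [NormedSpace ℝ E] {μ : Measure α}

theorem tendsto_integral_of_tendstoUniformly [IsFiniteMeasure μ] {ι : Type*} {l : Filter ι}
    {G : ι → α → E} {g : α → E} (hG : ∀ i, Integrable (G i) μ) (hg : Integrable g μ)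
    (hGg : TendstoUniformly G g l) :
    Tendsto (fun i ↦ ∫ x, G i x ∂μ) l (𝓝 (∫ x, g x ∂μ)) := by
  refine Metric.tendsto_nhds.2 fun ε hε ↦ ?_
  have hδ : 0 < ε / (μ.real Set.univ + 1) := by positivity
  filter_upwards [Metric.tendstoUniformly_iff.1 hGg _ hδ] with i hi
  calc dist (∫ x, G i x ∂μ) (∫ x, g x ∂μ)
      = ‖∫ x, (G i x - g x) ∂μ‖ := by rw [dist_eq_norm, integral_sub (hG i) hg]
    _ ≤ ε / (μ.real Set.univ + 1) * μ.real Set.univ :=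
        norm_integral_le_of_norm_le_const <| .of_forall fun x ↦ by
          rw [← dist_eq_norm, dist_comm]
          exact (hi x).le
    _ < ε / (μ.real Set.univ + 1) * (μ.real Set.univ + 1) := by gcongr; exact lt_add_one _
    _ = ε := div_mul_cancel₀ ε (by positivity)

theorem integral_comp_eq_of_measurePreserving {T : α → α} (hT : MeasurePreserving T μ μ)
    {h : α → E} (hh : AEStronglyMeasurable h μ) : ∫ x, h (T x) ∂μ = ∫ x, h x ∂μ := by
  rw [← integral_map hT.aemeasurable (hT.map_eq.symm ▸ hh), hT.map_eq]

theorem integral_eq_zero_of_tendstoUniformly_comp_sub [IsFiniteMeasure μ] {T : α → α}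
    (hT : MeasurePreserving T μ μ) {ι : Type*} {l : Filter ι} [l.NeBot] {F : α → E}
    (hF : Integrable F μ) {h : ι → α → E} (hh : ∀ i, Integrable (h i) μ)
    (hhF : TendstoUniformly (fun i x ↦ h i (T x) - h i x) F l) : ∫ x, F x ∂μ = 0 := by
  have h_comp (i : ι) : Integrable (fun x ↦ h i (T x)) μ := hT.integrable_comp_of_integrable (hh i)
  have coboundary_integral (i : ι) : ∫ x, (h i (T x) - h i x) ∂μ = 0 := by
    rw [integral_sub (h_comp i) (hh i),
      integral_comp_eq_of_measurePreserving hT (hh i).aestronglyMeasurable, sub_self]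
  have tendsto_integral : Tendsto (fun i ↦ ∫ x, (h i (T x) - h i x) ∂μ) l (𝓝 (∫ x, F x ∂μ)) :=
    tendsto_integral_of_tendstoUniformly (fun i ↦ (h_comp i).sub (hh i)) hF hhF
  simp only [coboundary_integral] at tendsto_integral
  exact tendsto_nhds_unique tendsto_integral tendsto_const_nhds

end Integral

section EmpiricalMeasure

variable {X : Type*} [MeasurableSpace X]

/-- The empirical measure of the orbit segment `x, T x, …, Tⁿ x`. It has `n + 1` points rather than
`n`, so that it is a probability measure for every `n`. -/
noncomputable def empiricalMeasure (T : X → X) (n : ℕ) (x : X) : ProbabilityMeasure X :=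
  ⟨((n + 1 : ℕ) : ENNReal)⁻¹ • ∑ k ∈ Finset.range (n + 1), Measure.dirac (T^[k] x), ⟨by
    simp [ENNReal.inv_mul_cancel]⟩⟩

theorem integral_empiricalMeasure [MeasurableSingletonClass X] {E : Type*} [NormedAddCommGroup E]
    [NormedSpace ℝ E] [CompleteSpace E] (T : X → X) (n : ℕ) (x : X) (g : X → E) :
    ∫ y, g y ∂(empiricalMeasure T n x : Measure X) = birkhoffAverage ℝ T g (n + 1) x := by
  rw [empiricalMeasure, ProbabilityMeasure.coe_mk, integral_smul_measure,
    integral_finsetSum_measure fun _ _ ↦ integrable_dirac (by simp)]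
  simp [birkhoffAverage, birkhoffSum, ENNReal.toReal_add]

variable [TopologicalSpace X] [BorelSpace X] [T1Space X]

theorem tendsto_birkhoffAverage_of_tendsto_empiricalMeasure {ι : Type*} {l : Filter ι} {T : X → X}
    {N : ι → ℕ} {x : ι → X} {ν : ProbabilityMeasure X}
    (hν : Tendsto (fun i ↦ empiricalMeasure T (N i) (x i)) l (𝓝 ν))
    (g : BoundedContinuousFunction X ℝ) :
    Tendsto (fun i ↦ birkhoffAverage ℝ T g (N i + 1) (x i)) l (𝓝 (∫ y, g y ∂(ν : Measure X))) := by
  simpa only [integral_empiricalMeasure] using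
    ProbabilityMeasure.tendsto_iff_forall_integral_tendsto.1 hν g

theorem measurePreserving_of_tendsto_empiricalMeasure [HasOuterApproxClosed X] {ι : Type*}
    {l : Filter ι} [l.NeBot] {T : X → X} (hT : Continuous T) {N : ι → ℕ} (hN : Tendsto N l atTop)
    {x : ι → X} {ν : ProbabilityMeasure X}
    (hν : Tendsto (fun i ↦ empiricalMeasure T (N i) (x i)) l (𝓝 ν)) :
    MeasurePreserving T (ν : Measure X) ν := by
  refine ⟨hT.measurable, ?_⟩
  have : IsProbabilityMeasure ((ν : Measure X).map T) :=
    Measure.isProbabilityMeasure_map hT.aemeasurable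
  refine ext_of_forall_integral_eq_of_IsFiniteMeasure fun g ↦ ?_
  rw [integral_map hT.aemeasurable g.continuous.aestronglyMeasurable, ← sub_eq_zero]
  have tendsto_integral_sub : Tendsto (fun i ↦ birkhoffAverage ℝ T (g ∘ T) (N i + 1) (x i) -
      birkhoffAverage ℝ T g (N i + 1) (x i)) l
      (𝓝 (∫ y, g (T y) ∂(ν : Measure X) - ∫ y, g y ∂(ν : Measure X))) :=
    (tendsto_birkhoffAverage_of_tendsto_empiricalMeasure hν (g.compContinuous ⟨T, hT⟩)).sub
      (tendsto_birkhoffAverage_of_tendsto_empiricalMeasure hν g)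
  have tendsto_zero : Tendsto (fun i ↦ birkhoffAverage ℝ T (g ∘ T) (N i + 1) (x i) -
      birkhoffAverage ℝ T g (N i + 1) (x i)) l (𝓝 0) := by
    simp only [birkhoffAverage_comp_self]
    exact tendsto_apply_of_tendstoUniformly_const
      (tendstoUniformly_birkhoffAverage_apply_sub ℝ T g.isBounded_range)
      ((tendsto_add_atTop_nat 1).comp hN) x
  exact tendsto_nhds_unique tendsto_integral_sub tendsto_zero

end EmpiricalMeasure

section CompactSpace

variable {X : Type*} [TopologicalSpace X] [CompactSpace X] [MeasurableSpace X] [BorelSpace X]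
  [T2Space X] [HasOuterApproxClosed X] {T : X → X}

theorem tendstoUniformly_birkhoffAverage_of_forall_integral_eq
    (hT : Continuous T) {F : X → ℝ} (hF : Continuous F) {c : ℝ}
    (hc : ∀ ν : Measure X, IsProbabilityMeasure ν → MeasurePreserving T ν ν → ∫ x, F x ∂ν = c) :
    TendstoUniformly (birkhoffAverage ℝ T F) (fun _ ↦ c) atTop := by
  rw [← tendstoUniformly_add_atTop_iff_nat 1, tendstoUniformly_const_iff_tendsto,
    tendsto_iff_ultrafilter]
  intro U hU
  have fst_atTop : Tendsto Prod.fst (U : Filter (ℕ × X)) atTop := tendsto_fst.mono_left hU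
  obtain ⟨ν, -, hν : Tendsto (fun q : ℕ × X ↦ empiricalMeasure T q.1 q.2) U (𝓝 ν)⟩ :=
    isCompact_univ.ultrafilter_le_nhds' (U.map fun q ↦ empiricalMeasure T q.1 q.2) univ_mem
  have ν_invariant := measurePreserving_of_tendsto_empiricalMeasure hT fst_atTop hν
  rw [← hc ν inferInstance ν_invariant]
  exact tendsto_birkhoffAverage_of_tendsto_empiricalMeasure hν (.mkOfCompact ⟨F, hF⟩)

theorem stmt9_general (hT : Continuous T) {F : X → ℝ} (hF : Continuous F) :
    (∀ ν : Measure X, IsProbabilityMeasure ν → MeasurePreserving T ν ν → ∫ x, F x ∂ν = 0) ↔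
      ∃ h : ℕ → X → ℝ, (∀ n, Continuous (h n)) ∧
        TendstoUniformly (fun n x ↦ h n (T x) - h n x) F atTop := by
  constructor
  · intro integral_eq_zero
    exact ⟨approxTransfer ℝ T F, continuous_approxTransfer ℝ hT hF,
      tendstoUniformly_approxTransfer_apply_sub ℝ <|
        tendstoUniformly_birkhoffAverage_of_forall_integral_eq hT hF integral_eq_zero⟩
  · rintro ⟨h, h_cont, hhF⟩ ν _ hTν
    have integrable {g : X → ℝ} (hg : Continuous g) : Integrable g ν :=
      hg.integrable_of_hasCompactSupport (.of_compactSpace g)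
    exact integral_eq_zero_of_tendstoUniformly_comp_sub hTν (integrable hF)
      (fun n ↦ integrable (h_cont n)) hhF

end CompactSpace

theorem isInvariantMeasure_iff_measurePreserving {X : Type*} [TopologicalSpace X]
    [MeasurableSpace X] [BorelSpace X] {φ : X ≃ₜ X} {ν : Measure X} :
    IsInvariantMeasure φ ν ↔ MeasurePreserving φ ν ν := by
  refine ⟨fun h ↦ ⟨φ.measurable, Measure.ext fun B hB ↦ ?_⟩,
    fun h B hB ↦ h.measure_preimage hB.nullMeasurableSet⟩
  rw [Measure.map_apply φ.measurable hB, h B hB]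

theorem stmt9 {X : Type*} [MetricSpace X] [CompactSpace X]
    [MeasurableSpace X] [BorelSpace X]
    (φ : X ≃ₜ X) (F : X → ℝ) (hF : Continuous F) :
    (∀ ν : Measure X, IsProbabilityMeasure ν → IsInvariantMeasure φ ν →
        ∫ x, F x ∂ν = 0) ↔
      ∃ h : ℕ → X → ℝ, (∀ n, Continuous (h n)) ∧
        TendstoUniformly (fun n x => h n (φ x) - h n x) F atTop := by
  simpa only [isInvariantMeasure_iff_measurePreserving] using stmt9_general φ.continuous hF
end

section
/- Let α be an irrational real number, let 𝕋 = ℝ/ℤ be the circle, let φ: 𝕋 → 𝕋 be the rotation φ(x) = x + α, and let λ be Haar (Lebesgue) probability measure on 𝕋. Then there exist a continuous function F: 𝕋 → ℝ, a non-negative Borel function v: 𝕋 → ℝ, and a strictly increasing sequence (n_k)_{k≥1} of natural numbers such that: (i) F(x) = v(x) − v(φ(x)) for λ-almost all x ∈ 𝕋; (ii) ∫_𝕋 F dλ = 0; (iii) v is not λ-integrable, i.e. ∫_𝕋 v dλ = ∞; and (iv) |∑_{i=0}^{n_k−1} F(φ^i(x))| ≤ 2 for all x ∈ 𝕋 and all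 k. -/
open MeasureTheory Filter Topology

/-!
Fix a sequence `1 = a 0 < a 1 < ⋯` along which the multiples `a m • β` tend to `0` so fast that
`(a i * a m) • β` is tiny whenever `i ≠ m`; compactness of the circle provides it. Pull back a tent
of height `2 ^ j` and width about `2 ^ (-j)` along `x ↦ a (2 * j + 1) • x`. The resulting functions
`V j` all have integral bounded below, but their supports have summable measure, so `v = ∑ V j` is
finite almost everywhere (`tsum` makes it `0` elsewhere) and not integrable. Since the odd-indexed
multiplier `a (2 * j + 1)` nearly annihilates both `β` and `a (2 * k + 2) • β`, the function `V j`
moves by at most `2 ^ (-j)` under translation by either; hence `∑ (V j - V j ∘ φ)` converges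
uniformly, and its Birkhoff sums of length `a (2 * k + 2)` telescope to quantities bounded by
`∑ 2 ^ (-j) = 2`.
-/

section CoboundarySum

variable {ι X : Type*} {T : X → X} {V : ι → X → ℝ} {b : ι → ℝ}

/-- The sum of the coboundaries `V j - V j ∘ T`. It may converge everywhere although `∑ V j` does
not, in which case it is still formally the coboundary of `∑ V j`. -/
noncomputable def coboundarySum (T : X → X) (V : ι → X → ℝ) (x : X) : ℝ :=
  ∑' j, (V j x - V j (T x))

lemma continuous_coboundarySum [TopologicalSpace X] (hT : Continuous T)
    (hV : ∀ j, Continuous (V j)) (hb : Summable b)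
    (hVb : ∀ j x, |V j x - V j (T x)| ≤ b j) : Continuous (coboundarySum T V) :=
  continuous_tsum (fun j ↦ (hV j).sub ((hV j).comp hT)) hb hVb

lemma sum_range_sub_comp_iterate (T : X → X) (f : X → ℝ) (n : ℕ) (x : X) :
    ∑ i ∈ Finset.range n, (f (T^[i] x) - f (T (T^[i] x))) = f x - f (T^[n] x) := by
  simpa only [Function.iterate_succ_apply', Function.iterate_zero_apply] using
    Finset.sum_range_sub' (fun i ↦ f (T^[i] x)) n

lemma birkhoffSum_coboundarySum (hV : ∀ x, Summable fun j ↦ V j x - V j (T x)) (n : ℕ) (x : X) :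
    birkhoffSum T (coboundarySum T V) n x = ∑' j, (V j x - V j (T^[n] x)) := by
  simp only [birkhoffSum, coboundarySum]
  rw [← Summable.tsum_finsetSum fun i _ ↦ hV (T^[i] x)]
  simp only [sum_range_sub_comp_iterate]

lemma abs_birkhoffSum_coboundarySum_le {B : ℝ} (hb : HasSum b B)
    (hVb : ∀ j x, |V j x - V j (T x)| ≤ b j) {n : ℕ} {x : X}
    (hVn : ∀ j, |V j x - V j (T^[n] x)| ≤ b j) :
    |birkhoffSum T (coboundarySum T V) n x| ≤ B := by
  rw [birkhoffSum_coboundarySum fun y ↦ .of_norm_bounded hb.summable fun j ↦ hVb j y]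
  exact tsum_of_norm_bounded (f := fun j ↦ V j x - V j (T^[n] x)) hb hVn

variable [MeasurableSpace X] {μ : Measure X}

lemma ae_coboundarySum_eq_tsum_sub_tsum (hT : Measure.QuasiMeasurePreserving T μ μ)
    (hV : ∀ᵐ x ∂μ, Summable fun j ↦ V j x) :
    ∀ᵐ x ∂μ, coboundarySum T V x = ∑' j, V j x - ∑' j, V j (T x) := by
  filter_upwards [hV, hT.ae hV] with x hx hTx
  exact hx.tsum_sub hTx

variable [Countable ι]

lemma ae_summable_of_tsum_measure_support_ne_top
    (hV : ∑' j, μ (Function.support (V j)) ≠ ⊤) : ∀ᵐ x ∂μ, Summable fun j ↦ V j x := by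
  filter_upwards [ae_finite_setOfPred_mem hV] with x hx
  exact summable_of_hasFiniteSupport hx

lemma integral_coboundarySum_eq_zero [IsFiniteMeasure μ] (hT : MeasurePreserving T μ μ)
    (hV : ∀ j, Integrable (V j) μ) (hb : Summable b)
    (hVb : ∀ j x, |V j x - V j (T x)| ≤ b j) : ∫ x, coboundarySum T V x ∂μ = 0 := by
  have hVT (j : ι) : Integrable (fun x ↦ V j (T x)) μ := hT.integrable_comp_of_integrable (hV j)
  have integral_comp (j : ι) : ∫ x, V j (T x) ∂μ = ∫ x, V j x ∂μ := by
    have h := integral_map hT.aemeasurable (f := V j) (by rw [hT.map_eq]; exact (hV j).1)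
    rw [← h, hT.map_eq]
  have norm_le (j : ι) : ∫ x, ‖V j x - V j (T x)‖ ∂μ ≤ μ.real Set.univ * b j := by
    simpa using integral_mono ((hV j).sub (hVT j)).norm (integrable_const (b j)) (hVb j)
  have summable_norm : Summable fun j ↦ ∫ x, ‖V j x - V j (T x)‖ ∂μ :=
    .of_nonneg_of_le (fun _ ↦ integral_nonneg fun _ ↦ norm_nonneg _) norm_le (hb.mul_left _)
  calc ∫ x, coboundarySum T V x ∂μ
      = ∑' j, ∫ x, (V j x - V j (T x)) ∂μ :=
        (integral_tsum_of_summable_integral_norm (fun j ↦ (hV j).sub (hVT j)) summable_norm).symm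
    _ = 0 := by simp [integral_sub (hV _) (hVT _), integral_comp]

lemma lintegral_ofReal_tsum_eq_top [Infinite ι] (hV : ∀ j, Measurable (V j))
    (hV_nonneg : ∀ j x, 0 ≤ V j x) (hV_summable : ∀ᵐ x ∂μ, Summable fun j ↦ V j x)
    {c : ENNReal} (hc : c ≠ 0) (hcV : ∀ j, c ≤ ∫⁻ x, ENNReal.ofReal (V j x) ∂μ) :
    ∫⁻ x, ENNReal.ofReal (∑' j, V j x) ∂μ = ⊤ := by
  calc ∫⁻ x, ENNReal.ofReal (∑' j, V j x) ∂μ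
      = ∫⁻ x, ∑' j, ENNReal.ofReal (V j x) ∂μ := by
        refine lintegral_congr_ae ?_
        filter_upwards [hV_summable] with x hx
        exact ENNReal.ofReal_tsum_of_nonneg (hV_nonneg · x) hx
    _ = ∑' j, ∫⁻ x, ENNReal.ofReal (V j x) ∂μ :=
        lintegral_tsum fun j ↦ (hV j).ennreal_ofReal.aemeasurable
    _ = ⊤ := top_unique <|
        (ENNReal.tsum_const_eq_top_of_ne_zero hc).symm.le.trans (ENNReal.tsum_le_tsum hcV)

end CoboundarySum

section Recurrence

variable {G : Type*} [SeminormedAddCommGroup G] [CompactSpace G]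

lemma exists_gt_norm_nsmul_lt (x : G) (a : ℕ) {ε : ℝ} (hε : 0 < ε) : ∃ b > a, ‖b • x‖ < ε := by
  have frequently_mem_ball : ∃ᶠ b : ℕ in atTop, b • x ∈ Metric.ball 0 ε :=
    (mapClusterPt_zero_atTop_nsmul x).frequently (Metric.ball_mem_nhds 0 hε)
  obtain ⟨b, hab, hb⟩ := frequently_atTop'.1 frequently_mem_ball a
  exact ⟨b, hab, mem_ball_zero_iff.1 hb⟩

lemma exists_gt_mul_norm_nsmul_le (x : G) (a : ℕ) {ε : ℝ} (hε : 0 < ε) :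
    ∃ b > a, a * ‖b • x‖ ≤ ε := by
  obtain ⟨b, hab, hb⟩ := exists_gt_norm_nsmul_lt x a (ε := ε / (a + 1)) (by positivity)
  refine ⟨b, hab, ?_⟩
  calc a * ‖b • x‖ ≤ (a + 1) * (ε / (a + 1)) := by gcongr; linarith
    _ = ε := by field_simp

lemma exists_strictMono_mul_norm_nsmul_le (x : G) {δ : ℕ → ℝ} (hδ : ∀ m, 0 < δ m) :
    ∃ a : ℕ → ℕ, StrictMono a ∧ a 0 = 1 ∧ ∀ i m, i < m → a i * ‖a m • x‖ ≤ δ m := by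
  choose next lt_next next_le using fun a m ↦ exists_gt_mul_norm_nsmul_le x a (hδ m)
  let a : ℕ → ℕ := Nat.rec 1 fun m am ↦ next am (m + 1)
  have ha : StrictMono a := strictMono_nat_of_lt_succ fun m ↦ lt_next (a m) (m + 1)
  refine ⟨a, ha, rfl, fun i m him ↦ ?_⟩
  obtain ⟨m, rfl⟩ := Nat.exists_eq_add_one_of_ne_zero him.ne_bot
  have hai : a i ≤ a m := ha.monotone (Nat.lt_succ_iff.1 him)
  exact (mul_le_mul_of_nonneg_right (Nat.cast_le.2 hai) (norm_nonneg _)).trans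
    (next_le (a m) (m + 1))

lemma exists_strictMono_pairwise_norm_mul_nsmul_le (x : G) {δ : ℕ → ℝ} (hδ : ∀ m, 0 < δ m) :
    ∃ a : ℕ → ℕ, StrictMono a ∧ a 0 = 1 ∧
      Pairwise fun i m ↦ ‖(a i * a m) • x‖ ≤ δ (max i m) := by
  obtain ⟨a, ha, ha0, ha_le⟩ := exists_strictMono_mul_norm_nsmul_le x hδ
  have of_lt {i m : ℕ} (him : i < m) : ‖(a i * a m) • x‖ ≤ δ m := by
    rw [mul_nsmul']
    exact norm_nsmul_le.trans (ha_le i m him)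
  refine ⟨a, ha, ha0, fun i m him ↦ ?_⟩
  rcases him.lt_or_gt with him | hmi
  · rw [max_eq_right him.le]
    exact of_lt him
  · rw [max_eq_left hmi.le, mul_comm]
    exact of_lt hmi

lemma exists_strictMono_norm_nsmul_nsmul_le (β : G) {δ : ℕ → ℝ} (hδ : ∀ m, 0 < δ m)
    (hδ_anti : Antitone δ) :
    ∃ q n : ℕ → ℕ, (∀ j, q j ≠ 0) ∧ StrictMono n ∧ (∀ j, ‖q j • β‖ ≤ δ j) ∧
      ∀ j k, ‖q j • n k • β‖ ≤ δ j := by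
  obtain ⟨a, ha, ha0, ha_le⟩ := exists_strictMono_pairwise_norm_mul_nsmul_le β hδ
  have norm_le {j m : ℕ} (hm : 2 * j + 1 ≠ m) : ‖a (2 * j + 1) • a m • β‖ ≤ δ j := by
    rw [← mul_nsmul']
    exact (ha_le hm).trans (hδ_anti (by omega))
  refine ⟨fun j ↦ a (2 * j + 1), fun k ↦ a (2 * k + 2), fun j ↦ ?_, fun k l hkl ↦ ha (by omega),
    fun j ↦ ?_, fun j k ↦ norm_le (by omega)⟩
  · exact Nat.one_le_iff_ne_zero.1 (ha0 ▸ ha.monotone (Nat.zero_le _))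
  · simpa [ha0] using norm_le (j := j) (m := 0) (by omega)

end Recurrence

section Tent

variable {E : Type*} [SeminormedAddCommGroup E]

/-- The radial tent function of height `h` supported on the ball of radius `h⁻¹`, so that on a
one-dimensional space its integral stays of order one as `h` grows. -/
noncomputable def tent (h : ℝ) (t : E) : ℝ := max 0 (h - h ^ 2 * ‖t‖)

lemma tent_nonneg (h : ℝ) (t : E) : 0 ≤ tent h t := le_max_left _ _

lemma continuous_tent (h : ℝ) : Continuous (tent h : E → ℝ) := by
  unfold tent
  fun_prop

lemma abs_tent_sub_tent_add_le (h : ℝ) (s t : E) :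
    |tent h s - tent h (s + t)| ≤ h ^ 2 * ‖t‖ := by
  calc |tent h s - tent h (s + t)|
      ≤ |(h - h ^ 2 * ‖s‖) - (h - h ^ 2 * ‖s + t‖)| := by
        simpa only [tent, max_comm] using abs_max_sub_max_le_abs _ _ (0 : ℝ)
    _ = h ^ 2 * |‖s + t‖ - ‖s‖| := by
        rw [← abs_of_nonneg (sq_nonneg h), ← abs_mul, abs_of_nonneg (sq_nonneg h)]
        ring_nf
    _ ≤ h ^ 2 * ‖t‖ := by
        gcongr
        simpa using abs_norm_sub_norm_le (s + t) s

lemma support_tent_subset_closedBall {h : ℝ} (hh : 0 < h) :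
    Function.support (tent h : E → ℝ) ⊆ Metric.closedBall 0 h⁻¹ := by
  intro t ht
  have pos : 0 < h - h ^ 2 * ‖t‖ := by
    by_contra! hle
    exact ht (max_eq_left hle)
  rw [mem_closedBall_zero_iff, ← one_div, le_div_iff₀ hh]
  nlinarith

lemma half_le_tent {h : ℝ} (hh : 0 < h) {t : E} (ht : t ∈ Metric.closedBall 0 (2 * h)⁻¹) :
    h / 2 ≤ tent h t := by
  rw [mem_closedBall_zero_iff] at ht
  refine le_max_of_le_right ?_
  calc h / 2 = h - h ^ 2 * (2 * h)⁻¹ := by field_simp; ring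
    _ ≤ h - h ^ 2 * ‖t‖ := by gcongr

end Tent

section TentPullback

variable {T : ℝ} {q : ℕ → ℕ}

/-- The tents of height `2 ^ j` pulled back along the covering maps `x ↦ q j • x` of the circle. -/
noncomputable def tentPullback (q : ℕ → ℕ) (j : ℕ) (x : AddCircle T) : ℝ := tent (2 ^ j) (q j • x)

lemma tentPullback_nonneg (q : ℕ → ℕ) (j : ℕ) (x : AddCircle T) : 0 ≤ tentPullback q j x :=
  tent_nonneg _ _

lemma continuous_tentPullback (q : ℕ → ℕ) (j : ℕ) :
    Continuous (tentPullback q j : AddCircle T → ℝ) :=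
  (continuous_tent _).comp (continuous_nsmul _)

lemma abs_tentPullback_sub_tentPullback_add_le {j : ℕ} {t : AddCircle T}
    (ht : ‖q j • t‖ ≤ (1 / 8) ^ j) (x : AddCircle T) :
    |tentPullback q j x - tentPullback q j (x + t)| ≤ (1 / 2) ^ j := by
  calc |tentPullback q j x - tentPullback q j (x + t)|
      ≤ (2 ^ j) ^ 2 * ‖q j • t‖ := by
        simpa only [tentPullback, nsmul_add] using abs_tent_sub_tent_add_le _ _ _
    _ ≤ (2 ^ j) ^ 2 * (1 / 8) ^ j := by gcongr
    _ = (1 / 2) ^ j := by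
        rw [← pow_mul, mul_comm j, pow_mul, ← mul_pow]
        norm_num

variable [Fact (0 < T)]

lemma measurePreserving_nsmul_addCircle {n : ℕ} (hn : n ≠ 0) :
    MeasurePreserving (fun x : AddCircle T ↦ n • x) := by
  simpa only [natCast_zsmul] using
    Measure.measurePreserving_zsmul (volume : Measure (AddCircle T)) (Int.natCast_ne_zero.2 hn)

lemma volume_support_tent_le {h : ℝ} (hh : 0 < h) :
    volume (Function.support (tent h : AddCircle T → ℝ)) ≤ ENNReal.ofReal (2 * h⁻¹) :=
  calc volume (Function.support (tent h : AddCircle T → ℝ))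
      ≤ volume (Metric.closedBall (0 : AddCircle T) h⁻¹) :=
        measure_mono (support_tent_subset_closedBall hh)
    _ = ENNReal.ofReal (min T (2 * h⁻¹)) := AddCircle.volume_closedBall T _
    _ ≤ ENNReal.ofReal (2 * h⁻¹) := ENNReal.ofReal_le_ofReal (min_le_right _ _)

lemma le_lintegral_tent {h : ℝ} (hh : 1 ≤ h) :
    ENNReal.ofReal (min T 1 / 2) ≤ ∫⁻ t : AddCircle T, ENNReal.ofReal (tent h t) := by
  have hT : 0 < T := Fact.out
  have h_pos : 0 < h := one_pos.trans_le hh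
  have min_le : min T 1 / 2 ≤ h / 2 * min T h⁻¹ := by
    rw [div_mul_eq_mul_div, mul_min_of_nonneg _ _ h_pos.le, mul_inv_cancel₀ h_pos.ne']
    gcongr
    exact le_mul_of_one_le_left hT.le hh
  calc ENNReal.ofReal (min T 1 / 2)
      ≤ ENNReal.ofReal (h / 2 * min T h⁻¹) := ENNReal.ofReal_le_ofReal min_le
    _ = ENNReal.ofReal (h / 2) * volume (Metric.closedBall (0 : AddCircle T) (2 * h)⁻¹) := by
        rw [AddCircle.volume_closedBall, ENNReal.ofReal_mul (by positivity), mul_inv,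
          mul_inv_cancel_left₀ two_ne_zero]
    _ ≤ ∫⁻ t in Metric.closedBall (0 : AddCircle T) (2 * h)⁻¹, ENNReal.ofReal (tent h t) := by
        rw [← setLIntegral_const]
        exact setLIntegral_mono' measurableSet_closedBall fun t ht ↦
          ENNReal.ofReal_le_ofReal (half_le_tent h_pos ht)
    _ ≤ ∫⁻ t : AddCircle T, ENNReal.ofReal (tent h t) := setLIntegral_le_lintegral _ _

lemma volume_support_tentPullback_le {j : ℕ} (hq : q j ≠ 0) :
    volume (Function.support (tentPullback q j : AddCircle T → ℝ)) ≤
      ENNReal.ofReal (2 * (1 / 2) ^ j) := by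
  have hms : MeasurableSet (Function.support (tent (2 ^ j) : AddCircle T → ℝ)) :=
    measurableSet_support (continuous_tent _).measurable
  have preimage_eq : Function.support (tentPullback q j : AddCircle T → ℝ) =
      (q j • ·) ⁻¹' Function.support (tent (2 ^ j)) :=
    Function.support_comp_eq_preimage (tent (2 ^ j)) (q j • ·)
  calc volume (Function.support (tentPullback q j : AddCircle T → ℝ))
      = volume (Function.support (tent (2 ^ j) : AddCircle T → ℝ)) := by
        rw [preimage_eq,
          (measurePreserving_nsmul_addCircle hq).measure_preimage hms.nullMeasurableSet]
    _ ≤ ENNReal.ofReal (2 * (1 / 2) ^ j) := by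
        simpa using volume_support_tent_le (T := T) (h := 2 ^ j) (by positivity)

lemma ae_summable_tentPullback (hq : ∀ j, q j ≠ 0) :
    ∀ᵐ x : AddCircle T, Summable fun j ↦ tentPullback q j x :=
  ae_summable_of_tsum_measure_support_ne_top <|
    ne_top_of_le_ne_top (summable_geometric_two.mul_left 2).tsum_ofReal_ne_top <|
      ENNReal.tsum_le_tsum fun j ↦ volume_support_tentPullback_le (hq j)

lemma le_lintegral_tentPullback {j : ℕ} (hq : q j ≠ 0) :
    ENNReal.ofReal (min T 1 / 2) ≤ ∫⁻ x : AddCircle T, ENNReal.ofReal (tentPullback q j x) := by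
  refine (le_lintegral_tent (one_le_pow₀ one_le_two (n := j))).trans_eq ?_
  exact ((measurePreserving_nsmul_addCircle hq).lintegral_comp
    (continuous_tent (2 ^ j)).measurable.ennreal_ofReal).symm

lemma lintegral_tsum_tentPullback_eq_top (hq : ∀ j, q j ≠ 0) :
    ∫⁻ x : AddCircle T, ENNReal.ofReal (∑' j, tentPullback q j x) = ⊤ := by
  have c_pos : 0 < min T 1 / 2 := half_pos (lt_min Fact.out one_pos)
  exact lintegral_ofReal_tsum_eq_top (fun j ↦ (continuous_tentPullback q j).measurable)
    (tentPullback_nonneg q) (ae_summable_tentPullback hq) (ENNReal.ofReal_pos.2 c_pos).ne'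
    fun j ↦ le_lintegral_tentPullback (hq j)

end TentPullback

theorem stmt18_general {T : ℝ} [Fact (0 < T)] (β : AddCircle T) :
    ∃ (F : AddCircle T → ℝ) (v : AddCircle T → ℝ) (n : ℕ → ℕ),
      Continuous F ∧ Measurable v ∧ (∀ x, 0 ≤ v x) ∧ StrictMono n ∧
      (∀ᵐ x : AddCircle T ∂volume, F x = v x - v (x + β)) ∧
      (∫ x : AddCircle T, F x ∂volume = 0) ∧
      (∫⁻ x : AddCircle T, ENNReal.ofReal (v x) ∂volume = ⊤) ∧
      (∀ x : AddCircle T, ∀ k : ℕ, |∑ i ∈ Finset.range (n k), F (x + i • β)| ≤ 2) := by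
  obtain ⟨q, n, hq, hn, hqβ, hqnβ⟩ := exists_strictMono_norm_nsmul_nsmul_le β
    (δ := fun j ↦ (1 / 8) ^ j) (fun j ↦ by positivity)
    (pow_right_anti₀ (by norm_num) (by norm_num))
  have hV (j : ℕ) : Continuous (tentPullback q j : AddCircle T → ℝ) := continuous_tentPullback q j
  have hVβ (j : ℕ) := abs_tentPullback_sub_tentPullback_add_le (hqβ j)
  have hVnβ (j k : ℕ) := abs_tentPullback_sub_tentPullback_add_le (hqnβ j k)
  have rotation_mp : MeasurePreserving (· + β) volume volume := measurePreserving_add_right _ β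
  refine ⟨coboundarySum (· + β) (tentPullback q), fun x ↦ ∑' j, tentPullback q j x, n,
    continuous_coboundarySum (continuous_add_const β) hV summable_geometric_two hVβ,
    .tsum fun j ↦ (hV j).measurable, fun x ↦ tsum_nonneg (tentPullback_nonneg q · x), hn,
    ae_coboundarySum_eq_tsum_sub_tsum rotation_mp.quasiMeasurePreserving
      (ae_summable_tentPullback hq),
    integral_coboundarySum_eq_zero rotation_mp
      (fun j ↦ (hV j).integrable_of_hasCompactSupport (.of_compactSpace _))
      summable_geometric_two hVβ,
    lintegral_tsum_tentPullback_eq_top hq, fun x k ↦ ?_⟩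
  have telescoped := abs_birkhoffSum_coboundarySum_le (T := (· + β)) (n := n k) (x := x)
    hasSum_geometric_two hVβ fun j ↦ by simpa only [add_right_iterate] using hVnβ j k x
  simpa only [birkhoffSum, add_right_iterate] using telescoped

theorem stmt18 (α : ℝ) (hα : Irrational α) :
    ∃ (F : UnitAddCircle → ℝ) (v : UnitAddCircle → ℝ) (n : ℕ → ℕ),
      Continuous F ∧ Measurable v ∧ (∀ x, 0 ≤ v x) ∧ StrictMono n ∧
      (∀ᵐ x : UnitAddCircle ∂volume, F x = v x - v (x + (α : UnitAddCircle))) ∧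
      (∫ x : UnitAddCircle, F x ∂volume = 0) ∧
      (∫⁻ x : UnitAddCircle, ENNReal.ofReal (v x) ∂volume = ⊤) ∧
      (∀ x : UnitAddCircle, ∀ k : ℕ,
        |∑ i ∈ Finset.range (n k), F (x + (i : ℕ) • (α : UnitAddCircle))| ≤ 2) :=
  stmt18_general (α : UnitAddCircle)
end
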